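/- arXiv:0910.2061 — 7 statements merged into one kernel-verified Lean document; each statement's English description precedes it below -/
import Mathlib

section
/- Let X be a compact metric space, let Y ⊆ X be closed, and let n be a positive integer. Let f, g : X → ℤ≥0 be bounded functions with f lower semicontinuous, g upper semicontinuous, and f(x) ≥ g(x) for every x ∈ X. Let a ∈ M_n(C(Y)) be positive with g(y) ≤ rank(a(y)) ≤ f(y) for all y ∈ Y. Then there exist an open set U ⊇ Y and a positive element b of C_b(U, M_n(ℂ)) (bounded continuous M_n(ℂ)-valued functions on U) such that b restricted to Y equals a and g(z) ≤ rank(b(z)) ≤ f(z) for all z ∈ U. -/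
open scoped ComplexOrder

namespace Stmt6Aux

open Matrix Filter Topology

/-- positive part of a matrix via functional calculus -/
noncomputable def pp {n : ℕ} (H : Matrix (Fin n) (Fin n) ℂ) : Matrix (Fin n) (Fin n) ℂ :=
  cfc (fun t : ℝ => max t 0) H

section
open scoped Matrix.Norms.L2Operator MatrixOrder

theorem pp_cont {n : ℕ} {X : Type*} [TopologicalSpace X] (a : X → Matrix (Fin n) (Fin n) ℂ)
    (ha : Continuous a) (hh : ∀ x, (a x).IsHermitian) : Continuous fun x => pp (a x) := by
  refine Continuous.cfc_of_mem_nhdsSet (s := Set.univ) (fun t : ℝ => max t 0) Filter.univ_mem ha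
    (fun x => (hh x).isSelfAdjoint) (by fun_prop)

theorem pp_psd {n : ℕ} (H : Matrix (Fin n) (Fin n) ℂ) : (pp H).PosSemidef := by
  rw [← Matrix.nonneg_iff_posSemidef]
  exact cfc_nonneg (fun x _ => le_max_right _ _)

theorem pp_self {n : ℕ} (H : Matrix (Fin n) (Fin n) ℂ) (hH : H.PosSemidef) : pp H = H := by
  have h0 : 0 ≤ H := Matrix.nonneg_iff_posSemidef.mpr hH
  have hs : IsSelfAdjoint H := hH.isHermitian.isSelfAdjoint
  conv_rhs => rw [← cfc_id ℝ H]
  apply cfc_congr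
  intro x hx
  exact max_eq_left (spectrum_nonneg_of_nonneg h0 hx)

theorem pp_decomp {n : ℕ} (H : Matrix (Fin n) (Fin n) ℂ) (hH : H.IsHermitian) :
    ∃ N : Matrix (Fin n) (Fin n) ℂ, N.PosSemidef ∧ H = pp H - N ∧ N * pp H = 0 := by
  have hs : IsSelfAdjoint H := hH.isSelfAdjoint
  refine ⟨cfc (fun t : ℝ => max (-t) 0) H, ?_, ?_, ?_⟩
  · rw [← Matrix.nonneg_iff_posSemidef]
    exact cfc_nonneg (fun x _ => le_max_right _ _)
  · unfold pp
    rw [← cfc_sub (fun t : ℝ => max t 0) (fun t : ℝ => max (-t) 0) H]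
    conv_lhs => rw [← cfc_id ℝ H]
    apply cfc_congr
    intro x _
    simp only [id]
    rcases le_total x 0 with h | h
    · rw [max_eq_right h, max_eq_left (by linarith)]; ring
    · rw [max_eq_left h, max_eq_right (by linarith)]; ring
  · unfold pp
    rw [← cfc_mul (fun t : ℝ => max (-t) 0) (fun t : ℝ => max t 0) H]
    rw [← cfc_const_zero ℝ H]
    apply cfc_congr
    intro x _
    rcases le_total x 0 with h | h
    · simp [max_eq_right h]
    · simp [max_eq_right (show -x ≤ 0 by linarith)]

/-- closeness implies quadratic form bound -/
theorem close_bound {n : ℕ} (B : Matrix (Fin n) (Fin n) ℂ) (hB : B.IsHermitian) {t : ℝ}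
    (ht : 0 < t) : ∀ᶠ A in 𝓝 B, A.IsHermitian → ((t : ℂ) • 1 - (A - B)).PosSemidef := by
  filter_upwards [Metric.ball_mem_nhds B ht] with A hA hAh
  have hs : IsSelfAdjoint (A - B) := (hAh.sub hB).isSelfAdjoint
  have h1 := hs.le_algebraMap_norm_self
  rw [Metric.mem_ball, dist_eq_norm] at hA
  have h2 : algebraMap ℝ (Matrix (Fin n) (Fin n) ℂ) ‖A - B‖ ≤
      algebraMap ℝ (Matrix (Fin n) (Fin n) ℂ) t := algebraMap_mono _ hA.le
  have h3 := h1.trans h2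
  rw [Matrix.le_iff] at h3
  have h4 : algebraMap ℝ (Matrix (Fin n) (Fin n) ℂ) t = (t : ℂ) • 1 := by
    rw [Algebra.algebraMap_eq_smul_one]
    ext i j
    simp [Matrix.smul_apply]
  rw [h4] at h3
  exact h3

theorem rank_lsc {n : ℕ} (B : Matrix (Fin n) (Fin n) ℂ) :
    ∀ᶠ A in 𝓝 B, B.rank ≤ A.rank := by
  let L : Matrix (Fin n) (Fin n) ℂ →ₗ[ℂ] ((Fin n → ℂ) →L[ℂ] (Fin n → ℂ)) :=
    (LinearMap.toContinuousLinearMap.toLinearMap).comp (Matrix.toLin'.toLinearMap)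
  have hL : Continuous L := L.continuous_of_finiteDimensional
  have key : ∀ A, ((B.rank : Cardinal) ≤ (L A : (Fin n → ℂ) →ₗ[ℂ] (Fin n → ℂ)).rank) ↔
      B.rank ≤ A.rank := by
    intro A
    have : (L A : (Fin n → ℂ) →ₗ[ℂ] (Fin n → ℂ)) = A.mulVecLin := by
      ext; simp [L]
    rw [this, LinearMap.rank, Matrix.rank, ← Module.finrank_eq_rank]
    norm_cast
  have := (isOpen_setOfPred_nat_le_rank (𝕜 := ℂ) (E := Fin n → ℂ) (F := Fin n → ℂ)
    B.rank).preimage hL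
  filter_upwards [this.mem_nhds (by
    show (B.rank : Cardinal) ≤ _
    exact (key B).2 le_rfl)] with A hA
  exact (key A).1 hA

end

theorem pp_rank_le {n : ℕ} (H M : Matrix (Fin n) (Fin n) ℂ) (hH : H.IsHermitian)
    (h : ∀ v, M *ᵥ v = 0 → (star v ⬝ᵥ H *ᵥ v).re ≤ 0) : (pp H).rank ≤ M.rank := by
  obtain ⟨N, hN, hHN, hNP⟩ := pp_decomp H hH
  set P := pp H with hP
  have hPp : P.PosSemidef := pp_psd H
  have hdisj : Disjoint (LinearMap.range P.mulVecLin) (LinearMap.ker M.mulVecLin) := by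
    rw [Submodule.disjoint_def]
    rintro _ ⟨u, rfl⟩ hv
    have h1 := h _ hv
    simp only [Matrix.mulVecLin_apply] at h1 ⊢
    have h2 : H *ᵥ (P *ᵥ u) = P *ᵥ (P *ᵥ u) := by
      rw [hHN, Matrix.sub_mulVec, Matrix.mulVec_mulVec u N P, hNP]; simp
    rw [h2] at h1
    have h3 := hPp.dotProduct_mulVec_nonneg (P *ᵥ u)
    have h4 : star (P *ᵥ u) ⬝ᵥ P *ᵥ (P *ᵥ u) = 0 := by
      rw [Complex.le_def] at h3
      apply Complex.ext
      · exact le_antisymm h1 h3.1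
      · exact h3.2.symm
    rw [hPp.dotProduct_mulVec_zero_iff] at h4
    have h5 : star (P *ᵥ u) ⬝ᵥ (P *ᵥ u) = 0 := by
      rw [Matrix.star_mulVec, ← Matrix.dotProduct_mulVec, hPp.isHermitian.eq, h4]; simp
    exact dotProduct_star_self_eq_zero.1 h5
  have h1 := Submodule.finrank_add_finrank_le_of_disjoint hdisj
  have h2 := M.mulVecLin.finrank_range_add_finrank_ker
  rw [Matrix.rank, Matrix.rank]
  omega

theorem pp_ker {n : ℕ} (H : Matrix (Fin n) (Fin n) ℂ) (hH : H.IsHermitian) (v : Fin n → ℂ)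
    (hv : pp H *ᵥ v = 0) : (star v ⬝ᵥ H *ᵥ v).re ≤ 0 := by
  obtain ⟨N, hN, hHN, hNP⟩ := pp_decomp H hH
  have h2 : H *ᵥ v = - (N *ᵥ v) := by
    conv_lhs => rw [hHN]
    rw [Matrix.sub_mulVec, hv]; simp
  rw [h2]
  have := (Complex.le_def.1 (hN.dotProduct_mulVec_nonneg v)).1
  simpa using this

/-- shift -/
noncomputable def sh {n : ℕ} (A : Matrix (Fin n) (Fin n) ℂ) (t : ℝ) : Matrix (Fin n) (Fin n) ℂ :=
  A - (t : ℂ) • 1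

theorem sh_herm {n : ℕ} {A : Matrix (Fin n) (Fin n) ℂ} (hA : A.IsHermitian) (t : ℝ) :
    (sh A t).IsHermitian := by
  unfold sh
  refine hA.sub ?_
  simp [Matrix.IsHermitian, Matrix.conjTranspose_smul]

theorem sh_quad {n : ℕ} (A : Matrix (Fin n) (Fin n) ℂ) (t : ℝ) (v : Fin n → ℂ) :
    (star v ⬝ᵥ sh A t *ᵥ v).re = (star v ⬝ᵥ A *ᵥ v).re - t * (star v ⬝ᵥ v).re := by
  simp [sh, Matrix.sub_mulVec, Matrix.smul_mulVec, dotProduct_sub]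

theorem self_nonneg {n : ℕ} (v : Fin n → ℂ) : 0 ≤ (star v ⬝ᵥ v).re :=
  (Complex.le_def.1 (dotProduct_star_self_nonneg v)).1

theorem sh_mono {n : ℕ} {A : Matrix (Fin n) (Fin n) ℂ} (hA : A.IsHermitian) {s t : ℝ}
    (hst : s ≤ t) : (pp (sh A t)).rank ≤ (pp (sh A s)).rank := by
  refine pp_rank_le _ _ (sh_herm hA t) fun v hv => ?_
  have h1 := pp_ker _ (sh_herm hA s) v hv
  rw [sh_quad] at h1 ⊢
  have := mul_le_mul_of_nonneg_right hst (self_nonneg v)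
  linarith

theorem sh_near {n : ℕ} (B : Matrix (Fin n) (Fin n) ℂ) (hB : B.IsHermitian) {t : ℝ}
    (ht : 0 < t) : ∀ᶠ A in 𝓝 B, A.IsHermitian → (pp (sh A t)).rank ≤ B.rank := by
  filter_upwards [close_bound B hB ht] with A hA hAh
  refine pp_rank_le _ _ (sh_herm hAh t) fun v hv => ?_
  have h1 := (Complex.le_def.1 ((hA hAh).dotProduct_mulVec_nonneg v)).1
  rw [sh_quad]
  simp [Matrix.sub_mulVec, Matrix.smul_mulVec, dotProduct_sub, hv] at h1
  linarith

theorem sh_zero_rank {n : ℕ} {A : Matrix (Fin n) (Fin n) ℂ} (hA : A.IsHermitian) (m : ℕ)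
    (h : ∀ k : ℕ, (pp (sh A ((1 / 2 : ℝ) ^ k))).rank ≤ m) : (pp (sh A 0)).rank ≤ m := by
  have hc : Continuous fun t : ℝ => pp (sh A t) := by
    refine pp_cont _ ?_ (fun t => sh_herm hA t)
    unfold sh
    fun_prop
  have h1 := hc.continuousAt.eventually (rank_lsc (pp (sh A 0)))
  have h2 : Tendsto (fun k : ℕ => (1 / 2 : ℝ) ^ k) atTop (𝓝 0) :=
    tendsto_pow_atTop_nhds_zero_of_lt_one (by norm_num) (by norm_num)
  obtain ⟨k, hk⟩ := (h2.eventually h1).exists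
  exact hk.trans (h k)

end Stmt6Aux

open Stmt6Aux Matrix Filter Topology in
/-- Extension of a positive matrix-valued function from a closed subset `Y` of a
compact metric space `X` to a bounded continuous positive function on an open neighbourhood
`U ⊇ Y`, with pointwise rank constrained between an upper semicontinuous `g` and a lower
semicontinuous `f`. -/
theorem stmt6 {X : Type*} [MetricSpace X] [CompactSpace X] (Y : Set X) (hY : IsClosed Y)
    (n : ℕ) (hn : 0 < n) (f g : X → ℕ)
    (hfbdd : ∃ C : ℕ, ∀ x, f x ≤ C) (hgbdd : ∃ C : ℕ, ∀ x, g x ≤ C)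
    (hf : LowerSemicontinuous f) (hg : UpperSemicontinuous g)
    (hfg : ∀ x, g x ≤ f x)
    (a : C(Y, Matrix (Fin n) (Fin n) ℂ)) (ha : ∀ y, (a y).PosSemidef)
    (harank : ∀ y : Y, g y.1 ≤ (a y).rank ∧ (a y).rank ≤ f y.1) :
    ∃ (U : Set X) (hYU : Y ⊆ U), IsOpen U ∧
      ∃ b : C(U, Matrix (Fin n) (Fin n) ℂ),
        (∃ C : ℝ, ∀ (z : U) (i j : Fin n), ‖b z i j‖ ≤ C) ∧
        (∀ z : U, (b z).PosSemidef) ∧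
        (∀ (y : X) (hy : y ∈ Y), b ⟨y, hYU hy⟩ = a ⟨y, hy⟩) ∧
        (∀ z : U, g z.1 ≤ (b z).rank ∧ (b z).rank ≤ f z.1) := by
  -- Hermitian extension
  have hT : ∀ i j : Fin n, ∃ F : C(X, ℂ), ∀ y : Y, F y = a y i j := by
    intro i j
    obtain ⟨F, h⟩ := ContinuousMap.exists_restrict_eq (Y := ℂ) hY
      ⟨fun y => a y i j, a.continuous.matrix_elem i j⟩
    exact ⟨F, fun y => congrArg (fun q => q y) h⟩
  choose F hF using hT
  let A0 : X → Matrix (Fin n) (Fin n) ℂ := fun x => Matrix.of fun i j => F i j x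
  have hA0 : ∀ y : Y, A0 y = a y := by
    intro y
    ext i j
    exact hF i j y
  have hA0c : Continuous A0 := continuous_matrix fun i j => (F i j).continuous
  let A : X → Matrix (Fin n) (Fin n) ℂ := fun x => (1 / 2 : ℂ) • (A0 x + (A0 x)ᴴ)
  have hAc : Continuous A := (hA0c.add hA0c.matrix_conjTranspose).const_smul (1 / 2 : ℂ)
  have hAh : ∀ x, (A x).IsHermitian := by
    intro x
    simp only [A, Matrix.IsHermitian, Matrix.conjTranspose_smul, Matrix.conjTranspose_add,
      Matrix.conjTranspose_conjTranspose]
    rw [add_comm]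
    simp
  have hAY : ∀ y : Y, A y = a y := by
    intro y
    have h1 : (a y)ᴴ = a y := (ha y).isHermitian
    simp only [A]
    rw [hA0 y, h1, ← two_smul ℂ, smul_smul]
    norm_num
  -- good neighbourhoods
  let V : ℕ → Set X := fun k => interior {z | (pp (sh (A z) ((1 / 2 : ℝ) ^ k))).rank ≤ f z}
  have hVY : ∀ k, Y ⊆ V k := by
    intro k y hy
    rw [mem_interior_iff_mem_nhds]
    have h1 := hAc.continuousAt.eventually
      (sh_near (A y) (hAh y) (show (0 : ℝ) < (1 / 2) ^ k by positivity))
    have h2 : ∀ᶠ z in 𝓝 y, f y ≤ f z := by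
      rcases Nat.eq_zero_or_pos (f y) with h0 | h0
      · exact Eventually.of_forall fun z => by omega
      · filter_upwards [hf y (f y - 1) (by omega)] with z hz
        omega
    filter_upwards [h1, h2] with z hz1 hz2
    refine (hz1 (hAh z)).trans (le_trans ?_ hz2)
    rw [hAY ⟨y, hy⟩]
    exact (harank ⟨y, hy⟩).2
  have hVr : ∀ k z, z ∈ V k → (pp (sh (A z) ((1 / 2 : ℝ) ^ k))).rank ≤ f z := by
    intro k z hz
    have h : z ∈ {z | (pp (sh (A z) ((1 / 2 : ℝ) ^ k))).rank ≤ f z} := interior_subset hz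
    exact h
  have hU : ∀ k, ∃ χ : C(X, ℝ), Set.EqOn χ 0 Y ∧ Set.EqOn χ 1 (V k)ᶜ ∧
      ∀ x, χ x ∈ Set.Icc (0 : ℝ) 1 := fun k =>
    exists_continuous_zero_one_of_isClosed hY isOpen_interior.isClosed_compl
      (Set.disjoint_compl_right_iff_subset.2 (hVY k))
  choose χ hχ0 hχ1 hχI using hU
  have hsum : Summable fun k : ℕ => 2 * (1 / 2 : ℝ) ^ k :=
    (summable_geometric_of_lt_one (by norm_num) (by norm_num)).mul_left 2
  have hbd : ∀ k x, ‖2 * (1 / 2 : ℝ) ^ k * χ k x‖ ≤ 2 * (1 / 2 : ℝ) ^ k := by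
    intro k x
    have hp : (0 : ℝ) ≤ 2 * (1 / 2 : ℝ) ^ k := by positivity
    rw [Real.norm_of_nonneg (mul_nonneg hp (hχI k x).1)]
    exact mul_le_of_le_one_right hp (hχI k x).2
  let ε : X → ℝ := fun x => ∑' k, 2 * (1 / 2 : ℝ) ^ k * χ k x
  have hεc : Continuous ε := continuous_tsum (fun k => by fun_prop) hsum hbd
  have hnn : ∀ k x, 0 ≤ 2 * (1 / 2 : ℝ) ^ k * χ k x := fun k x =>
    mul_nonneg (by positivity) (hχI k x).1
  have hε0 : ∀ x, 0 ≤ ε x := fun x => tsum_nonneg fun k => hnn k x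
  have hεY : ∀ y ∈ Y, ε y = 0 := by
    intro y hy
    simp only [ε]
    have : ∀ k, χ k y = 0 := fun k => hχ0 k hy
    simp [this]
  have hεk : ∀ k x, x ∉ V k → 2 * (1 / 2 : ℝ) ^ k ≤ ε x := by
    intro k x hx
    have h1 : χ k x = 1 := hχ1 k hx
    have h2 := (Summable.of_norm_bounded hsum (fun k => hbd k x)).le_tsum k
      (fun j _ => hnn j x)
    rw [h1, mul_one] at h2
    exact h2
  let b : X → Matrix (Fin n) (Fin n) ℂ := fun x => pp (sh (A x) (ε x))
  have hbc : Continuous b := by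
    refine pp_cont _ ?_ (fun x => sh_herm (hAh x) _)
    unfold sh
    exact hAc.sub ((Complex.continuous_ofReal.comp hεc).smul continuous_const)
  have hbY : ∀ y : Y, b y = a y := by
    intro y
    simp only [b]
    rw [hεY y y.2, hAY, show sh (a y) 0 = a y by simp [sh]]
    exact pp_self _ (ha y)
  have hup : ∀ z ∈ V 0, (b z).rank ≤ f z := by
    intro z hz
    by_cases hall : ∀ k, z ∈ V k
    · exact (sh_mono (hAh z) (hε0 z)).trans
        (sh_zero_rank (hAh z) _ fun k => hVr k z (hall k))
    · push Not at hall
      classical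
      have hk := Nat.find_spec hall
      have hmin := fun m => Nat.find_min hall (m := m)
      set k := Nat.find hall
      obtain ⟨j, hj⟩ : ∃ j, k = j + 1 :=
        Nat.exists_eq_succ_of_ne_zero (fun h0 => hk (by rw [h0]; exact hz))
      have hjV : z ∈ V j := by
        have := hmin j (by omega)
        simpa using this
      have h1 := hεk k z hk
      rw [hj, pow_succ] at h1
      exact (sh_mono (hAh z) (by linarith)).trans (hVr j z hjV)
  have hlow : ∀ y ∈ Y, ∀ᶠ z in 𝓝 y, g z ≤ (b z).rank := by
    intro y hy
    have h1 := hbc.continuousAt.eventually (rank_lsc (b y))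
    filter_upwards [h1, hg y (g y + 1) (by omega)] with z hz1 hz2
    have h2 := (harank ⟨y, hy⟩).1
    rw [← hbY ⟨y, hy⟩] at h2
    simp only at h2
    omega
  refine ⟨interior {z | g z ≤ (b z).rank ∧ (b z).rank ≤ f z}, ?_, isOpen_interior,
    ⟨fun z => b z, hbc.comp continuous_subtype_val⟩, ?_, fun z => pp_psd _,
    fun y hy => hbY ⟨y, hy⟩, fun z => ?_⟩
  · intro y hy
    rw [mem_interior_iff_mem_nhds]
    filter_upwards [hlow y hy, isOpen_interior.mem_nhds (hVY 0 hy)] with z hz1 hz2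
    exact ⟨hz1, hup z hz2⟩
  · have hc : Continuous fun x => ∑ i, ∑ j, ‖b x i j‖ :=
      continuous_finsetSum _ fun i _ => continuous_finsetSum _ fun j _ =>
        (hbc.matrix_elem i j).norm
    obtain ⟨C, hC⟩ := (isCompact_range hc).bddAbove
    refine ⟨C, fun z i j => ?_⟩
    refine le_trans ?_ (hC ⟨z.1, rfl⟩)
    refine le_trans ?_ (Finset.single_le_sum (f := fun i => ∑ j, ‖b z.1 i j‖)
      (fun i _ => Finset.sum_nonneg fun j _ => norm_nonneg _) (Finset.mem_univ i))
    exact Finset.single_le_sum (f := fun j => ‖b z.1 i j‖)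
      (fun j _ => norm_nonneg _) (Finset.mem_univ j)
  · have h : z.1 ∈ {z | g z ≤ (b z).rank ∧ (b z).rank ≤ f z} := interior_subset z.2
    exact h
end

section
/- Let X be a compact metric space of finite covering dimension, let Y ⊆ X be closed, and let n be a positive integer. Let k, l ∈ ℕ satisfy k ≤ n and k − l ≥ 4·dim(X). Suppose a ∈ M_n(C(Y)) is positive and satisfies l ≤ rank(a(y)) ≤ k for all y ∈ Y. Then there is a positive element b ∈ M_n(C(X)) such that b restricted to Y equals a and l ≤ rank(b(x)) ≤ k for all x ∈ X. -/
open scoped ComplexOrder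

/-- `X` has Lebesgue covering dimension at most `d`: every open cover admits an open
refinement in which every point belongs to at most `d + 1` members. -/
def HasCovDimLE (X : Type*) [TopologicalSpace X] (d : ℕ) : Prop :=
  ∀ 𝒰 : Set (Set X), (∀ U ∈ 𝒰, IsOpen U) → ⋃₀ 𝒰 = Set.univ →
    ∃ 𝒱 : Set (Set X), (∀ V ∈ 𝒱, IsOpen V) ∧ ⋃₀ 𝒱 = Set.univ ∧
      (∀ V ∈ 𝒱, ∃ U ∈ 𝒰, V ⊆ U) ∧
      ∀ x : X, {V ∈ 𝒱 | x ∈ V}.Finite ∧ {V ∈ 𝒱 | x ∈ V}.ncard ≤ d + 1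

/-- `X` has Lebesgue covering dimension exactly `d`: `d` is the least natural number
such that `HasCovDimLE X d`. -/
def IsCovDim (X : Type*) [TopologicalSpace X] (d : ℕ) : Prop :=
  HasCovDimLE X d ∧ ∀ e : ℕ, HasCovDimLE X e → d ≤ e

section Helpers

open scoped Matrix.Norms.L2Operator

lemma sym_quad {E : Type*} [NormedAddCommGroup E] [InnerProductSpace ℂ E] [FiniteDimensional ℂ E]
    {n : ℕ} {T : E →ₗ[ℂ] E} (hT : T.IsSymmetric) (hn : Module.finrank ℂ E = n) (x : E) :
    RCLike.re (inner ℂ x (T x)) =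
      ∑ i, hT.eigenvalues hn i * ‖inner ℂ (hT.eigenvectorBasis hn i) x‖ ^ 2 := by
  have h1 := (hT.eigenvectorBasis hn).sum_inner_mul_inner x (T x)
  rw [← h1, map_sum]
  refine Finset.sum_congr rfl fun i _ => ?_
  have h2 : inner ℂ (hT.eigenvectorBasis hn i) (T x) =
      (hT.eigenvalues hn i : ℂ) * inner ℂ (hT.eigenvectorBasis hn i) x := by
    rw [← hT, hT.apply_eigenvectorBasis, inner_smul_left]; simp
  rw [h2, ← inner_conj_symm x]
  have : (starRingEnd ℂ) (inner ℂ (hT.eigenvectorBasis hn i) x) *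
      ((hT.eigenvalues hn i : ℂ) * inner ℂ (hT.eigenvectorBasis hn i) x)
      = ((hT.eigenvalues hn i * ‖inner ℂ (hT.eigenvectorBasis hn i) x‖ ^ 2 : ℝ) : ℂ) := by
    have := RCLike.conj_mul (inner ℂ (hT.eigenvectorBasis hn i) x : ℂ)
    push_cast
    rw [mul_left_comm, this]; simp
  rw [this]; exact Complex.ofReal_re _

lemma weyl_le {E : Type*} [NormedAddCommGroup E] [InnerProductSpace ℂ E] [FiniteDimensional ℂ E]
    {n : ℕ} {S T : E →ₗ[ℂ] E} (hS : S.IsSymmetric) (hT : T.IsSymmetric)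
    (hn : Module.finrank ℂ E = n) (c : ℝ)
    (hc : ∀ x, RCLike.re (inner ℂ x (T x)) ≤ RCLike.re (inner ℂ x (S x)) + c * ‖x‖ ^ 2)
    (j : Fin n) :
    hT.eigenvalues hn j ≤ hS.eigenvalues hn j + c := by
  let f : E →ₗ[ℂ] ({i : Fin n // i ≠ j} → ℂ) := LinearMap.pi fun i =>
    if i.1 < j then (innerSL ℂ (hS.eigenvectorBasis hn i.1)).toLinearMap
    else (innerSL ℂ (hT.eigenvectorBasis hn i.1)).toLinearMap
  have hker : LinearMap.ker f ≠ ⊥ := by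
    apply LinearMap.ker_ne_bot_of_finrank_lt
    have : 0 < n := j.pos
    simp [hn]; omega
  obtain ⟨x, hx, hx0⟩ := (Submodule.ne_bot_iff _).1 hker
  have hx' : ∀ i, i ≠ j → f x = 0 := fun _ _ => by simpa using hx
  have hA : ∀ i, i < j → inner ℂ (hS.eigenvectorBasis hn i) x = 0 := by
    intro i hi
    have := congrFun (hx' i hi.ne) ⟨i, hi.ne⟩
    simpa [f, hi] using this
  have hB : ∀ i, j < i → inner ℂ (hT.eigenvectorBasis hn i) x = 0 := by
    intro i hi
    have := congrFun (hx' i hi.ne') ⟨i, hi.ne'⟩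
    simpa [f, hi.not_gt] using this
  have h1 : hT.eigenvalues hn j * ‖x‖ ^ 2 ≤ RCLike.re (inner ℂ x (T x)) := by
    rw [sym_quad hT hn, ← (hT.eigenvectorBasis hn).sum_sq_norm_inner_right x, Finset.mul_sum]
    refine Finset.sum_le_sum fun i _ => ?_
    rcases lt_or_ge j i with h | h
    · simp [hB i h]
    · exact mul_le_mul_of_nonneg_right (hT.eigenvalues_antitone hn h) (by positivity)
  have h2 : RCLike.re (inner ℂ x (S x)) ≤ hS.eigenvalues hn j * ‖x‖ ^ 2 := by
    rw [sym_quad hS hn, ← (hS.eigenvectorBasis hn).sum_sq_norm_inner_right x, Finset.mul_sum]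
    refine Finset.sum_le_sum fun i _ => ?_
    rcases lt_or_ge i j with h | h
    · simp [hA i h]
    · exact mul_le_mul_of_nonneg_right (hS.eigenvalues_antitone hn h) (by positivity)
  have hpos : 0 < ‖x‖ ^ 2 := by positivity
  have := hc x
  nlinarith

variable {n : ℕ}

noncomputable def symM (A : Matrix (Fin n) (Fin n) ℂ) : Matrix (Fin n) (Fin n) ℂ :=
  (1/2 : ℝ) • (A + A.conjTranspose)

lemma symM_herm (A : Matrix (Fin n) (Fin n) ℂ) : (symM A).IsHermitian := by
  unfold symM Matrix.IsHermitian
  rw [Matrix.conjTranspose_smul]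
  simp [add_comm]

lemma symM_eq {A : Matrix (Fin n) (Fin n) ℂ} (h : A.IsHermitian) : symM A = A := by
  unfold symM
  rw [h.eq, ← two_smul ℝ A, smul_smul]; norm_num

lemma continuous_symM : Continuous (symM : Matrix (Fin n) (Fin n) ℂ → _) := by
  unfold symM; fun_prop

/-- `j`-th largest eigenvalue of the Hermitian part. -/
noncomputable def lam (j : Fin (Fintype.card (Fin n))) (A : Matrix (Fin n) (Fin n) ℂ) : ℝ :=
  (symM_herm A).eigenvalues₀ j

lemma lam_eq (j : Fin (Fintype.card (Fin n))) {A : Matrix (Fin n) (Fin n) ℂ}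
    (h : A.IsHermitian) : lam j A = h.eigenvalues₀ j := by
  unfold lam
  congr! 1
  exact symM_eq h

lemma lam_le (j : Fin (Fintype.card (Fin n))) (A B : Matrix (Fin n) (Fin n) ℂ) :
    lam j A ≤ lam j B + ‖symM A - symM B‖ := by
  unfold lam Matrix.IsHermitian.eigenvalues₀
  apply weyl_le
  intro x
  have h1 : (Matrix.toEuclideanLin (symM A)) x = Matrix.toEuclideanLin (symM B) x +
      Matrix.toEuclideanCLM (𝕜 := ℂ) (symM A - symM B) x := by
    rw [← Matrix.coe_toEuclideanCLM_eq_toEuclideanLin, ← Matrix.coe_toEuclideanCLM_eq_toEuclideanLin]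
    simp
  rw [h1, inner_add_right, map_add]
  gcongr
  refine (RCLike.re_le_norm _).trans ((norm_inner_le_norm _ _).trans ?_)
  rw [Matrix.cstar_norm_def]
  have := (Matrix.toEuclideanCLM (𝕜 := ℂ) (symM A - symM B)).le_opNorm x
  nlinarith [norm_nonneg x]

lemma continuous_lam (j : Fin (Fintype.card (Fin n))) :
    Continuous (lam j : Matrix (Fin n) (Fin n) ℂ → ℝ) := by
  have h : ∀ A B : Matrix (Fin n) (Fin n) ℂ, dist (lam j A) (lam j B) ≤ 1 * dist (symM A) (symM B) := by
    intro A B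
    rw [Real.dist_eq, abs_le, one_mul, dist_eq_norm]
    have h1 := lam_le j A B
    have h2 := lam_le j B A
    rw [norm_sub_rev] at h2
    constructor <;> linarith
  rw [continuous_iff_continuousAt]
  intro A
  rw [ContinuousAt, tendsto_iff_dist_tendsto_zero]
  refine squeeze_zero (fun _ => dist_nonneg) (fun B => h B A) ?_
  have := (continuous_symM (n := n)).tendsto A
  rw [tendsto_iff_dist_tendsto_zero] at this
  simpa using this

lemma lam_anti (A : Matrix (Fin n) (Fin n) ℂ) : Antitone (fun j => lam j A) :=
  (symM_herm A).eigenvalues₀_antitone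

lemma rank_cfc {A : Matrix (Fin n) (Fin n) ℂ} (h : A.IsHermitian) (f : ℝ → ℝ) :
    (cfc f A).rank = Fintype.card {j : Fin (Fintype.card (Fin n)) // f (lam j A) ≠ 0} := by
  classical
  rw [h.cfc_eq, Matrix.IsHermitian.cfc, Unitary.conjStarAlgAut_apply]
  have hu : IsUnit ((h.eigenvectorUnitary : Matrix (Fin n) (Fin n) ℂ)).det :=
    (Matrix.isUnit_iff_isUnit_det _).1 (Unitary.isUnit_coe (U := h.eigenvectorUnitary))
  have hu' : IsUnit ((star h.eigenvectorUnitary : Matrix (Fin n) (Fin n) ℂ)).det := by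
    have := (Matrix.isUnit_iff_isUnit_det _).1 (Unitary.isUnit_coe (U := star h.eigenvectorUnitary))
    simpa using this
  rw [Matrix.rank_mul_eq_left_of_isUnit_det _ _ hu', Matrix.rank_mul_eq_right_of_isUnit_det _ _ hu,
    Matrix.rank_diagonal]
  refine Fintype.card_congr (Equiv.subtypeEquiv
    ((Fintype.equivOfCardEq (Fintype.card_fin _)).symm) ?_)
  intro i
  simp [Matrix.IsHermitian.eigenvalues, lam_eq _ h]

lemma rank_sub {A : Matrix (Fin n) (Fin n) ℂ} (h : A.IsHermitian) (s : ℝ) :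
    (A - s • (1 : Matrix (Fin n) (Fin n) ℂ)).rank =
      Fintype.card {j : Fin (Fintype.card (Fin n)) // lam j A ≠ s} := by
  have h' : IsSelfAdjoint A := h
  have : cfc (fun x : ℝ => x - s) A = A - s • (1 : Matrix (Fin n) (Fin n) ℂ) := by
    rw [cfc_sub (fun x => x) (fun _ => s) A, cfc_id' ℝ A, cfc_const s A]
    simp [Algebra.algebraMap_eq_smul_one]
  rw [← this, rank_cfc h]; simp [sub_ne_zero]

lemma lam_rank {A : Matrix (Fin n) (Fin n) ℂ} (h : A.IsHermitian) :
    A.rank = Fintype.card {j : Fin (Fintype.card (Fin n)) // lam j A ≠ 0} := by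
  have := rank_sub h 0
  simpa using this

/-- Cut down by subtracting the `k`-th eigenvalue and taking the positive part. -/
noncomputable def cut (k : Fin (Fintype.card (Fin n))) (A : Matrix (Fin n) (Fin n) ℂ) :
    Matrix (Fin n) (Fin n) ℂ :=
  cfc (fun x : ℝ => max x 0) (symM A - lam k A • (1 : Matrix (Fin n) (Fin n) ℂ))

lemma shift_sa (A : Matrix (Fin n) (Fin n) ℂ) (s : ℝ) :
    IsSelfAdjoint (symM A - s • (1 : Matrix (Fin n) (Fin n) ℂ)) := by
  have h : IsSelfAdjoint (symM A) := symM_herm A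
  exact h.sub ((IsSelfAdjoint.all s).smul (IsSelfAdjoint.one _))

lemma continuous_cut (k : Fin (Fintype.card (Fin n))) :
    Continuous (cut k : Matrix (Fin n) (Fin n) ℂ → _) := by
  unfold cut
  refine Continuous.cfc_of_mem_nhdsSet (s := Set.univ) _ Filter.univ_mem ?_
    (fun A => shift_sa A _) (by fun_prop)
  exact continuous_symM.sub ((continuous_lam k).smul continuous_const)

lemma cut_eq (k : Fin (Fintype.card (Fin n))) {A : Matrix (Fin n) (Fin n) ℂ} (h : A.IsHermitian) :
    cut k A = cfc (fun x : ℝ => max (x - lam k A) 0) A := by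
  have h' : IsSelfAdjoint A := h
  have : cfc (fun x : ℝ => x - lam k A) A = A - lam k A • (1 : Matrix (Fin n) (Fin n) ℂ) := by
    rw [cfc_sub (fun x => x) (fun _ => lam k A) A, cfc_id' ℝ A, cfc_const (lam k A) A]
    simp [Algebra.algebraMap_eq_smul_one]
  unfold cut
  rw [symM_eq h, ← this, ← cfc_comp (fun x : ℝ => max x 0) (fun x : ℝ => x - lam k A) A]
  rfl

lemma cut_posSemidef (k : Fin (Fintype.card (Fin n))) (A : Matrix (Fin n) (Fin n) ℂ) :
    (cut k A).PosSemidef := by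
  open scoped MatrixOrder in
  have : 0 ≤ cut k A := cfc_nonneg (fun x _ => le_max_right _ _)
  exact Matrix.nonneg_iff_posSemidef.1 this

lemma lam_nonneg {A : Matrix (Fin n) (Fin n) ℂ} (h : A.PosSemidef)
    (j : Fin (Fintype.card (Fin n))) : 0 ≤ lam j A := by
  rw [lam_eq j h.1]
  have := h.eigenvalues_nonneg ((Fintype.equivOfCardEq (Fintype.card_fin _)) j)
  simpa [Matrix.IsHermitian.eigenvalues] using this

lemma card_le_of_le (m k : ℕ) (_ : k ≤ m) (P : Fin m → Prop) [DecidablePred P]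
    (h : ∀ j : Fin m, P j → (j : ℕ) < k) : Fintype.card {j // P j} ≤ k := by
  have := Fintype.card_le_of_injective (fun j : {j // P j} => (⟨j.1, h _ j.2⟩ : Fin k))
    (fun a b hab => by
      have := congrArg Fin.val hab
      exact Subtype.ext (Fin.ext this))
  simpa using this

lemma le_card_of (m l : ℕ) (hl : l ≤ m) (P : Fin m → Prop) [DecidablePred P]
    (h : ∀ j : Fin m, (j : ℕ) < l → P j) : l ≤ Fintype.card {j // P j} := by
  have := Fintype.card_le_of_injective
    (fun j : Fin l => (⟨⟨j.1, j.2.trans_le hl⟩, h _ j.2⟩ : {j // P j}))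
    (fun a b hab => by
      have := congrArg (fun z => (z.1 : ℕ)) hab
      exact Fin.ext this)
  simpa using this

/-- rank at most `k` forces the `k`-th eigenvalue of a psd matrix to vanish -/
lemma lam_zero_of_rank {A : Matrix (Fin n) (Fin n) ℂ} (h : A.PosSemidef)
    (k : Fin (Fintype.card (Fin n))) (hr : A.rank ≤ k) : lam k A = 0 := by
  by_contra hne
  have hpos : 0 < lam k A := lt_of_le_of_ne (lam_nonneg h k) (Ne.symm hne)
  have := le_card_of _ (k + 1) k.2 (fun j => lam j A ≠ 0) (fun j hj => by
    have : lam k A ≤ lam j A := lam_anti A (Fin.le_def.2 (by omega))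
    exact (hpos.trans_le this).ne')
  rw [lam_rank h.1] at hr
  omega

lemma lam_pos_of_rank {A : Matrix (Fin n) (Fin n) ℂ} (h : A.PosSemidef)
    (k : Fin (Fintype.card (Fin n))) (hr : (k : ℕ) < A.rank) : 0 < lam k A := by
  by_contra hne
  have := card_le_of_le _ k k.2.le (fun j => lam j A ≠ 0) (fun j hj => by
    by_contra hjk
    have h1 : lam j A ≤ lam k A := lam_anti A (Fin.le_def.2 (by omega))
    exact hj (le_antisymm (h1.trans (not_lt.1 hne)) (lam_nonneg h j)))
  rw [lam_rank h.1] at hr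
  omega

lemma cut_of_rank {A : Matrix (Fin n) (Fin n) ℂ} (h : A.PosSemidef)
    (k : Fin (Fintype.card (Fin n))) (hr : A.rank ≤ k) : cut k A = A := by
  have h' : IsSelfAdjoint A := h.1
  rw [cut_eq k h.1, lam_zero_of_rank h k hr]
  conv_rhs => rw [← cfc_id' ℝ A]
  refine cfc_congr fun x hx => ?_
  rw [h.1.spectrum_real_eq_range_eigenvalues] at hx
  obtain ⟨i, rfl⟩ := hx
  simpa using h.eigenvalues_nonneg i

lemma rank_cut_le (k : Fin (Fintype.card (Fin n))) {A : Matrix (Fin n) (Fin n) ℂ}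
    (h : A.IsHermitian) : (cut k A).rank ≤ k := by
  rw [cut_eq k h, rank_cfc h]
  refine card_le_of_le _ k k.2.le _ (fun j hj => ?_)
  by_contra hjk
  have h1 : lam j A ≤ lam k A := lam_anti A (Fin.le_def.2 (by omega))
  exact hj (max_eq_right (by linarith))

lemma le_rank_cut (k p : Fin (Fintype.card (Fin n))) {A : Matrix (Fin n) (Fin n) ℂ}
    (h : A.IsHermitian) (hg : lam k A < lam p A) : (p : ℕ) + 1 ≤ (cut k A).rank := by
  rw [cut_eq k h, rank_cfc h]
  refine le_card_of _ (p + 1) p.2 _ (fun j hj => ?_)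
  have h1 : lam p A ≤ lam j A := lam_anti A (Fin.le_def.2 (by omega))
  have : 0 < lam j A - lam k A := by linarith
  exact ne_of_gt (lt_max_of_lt_left this)

/-- no gap means high multiplicity -/
lemma gap_of_rank (k p : Fin (Fintype.card (Fin n))) {A : Matrix (Fin n) (Fin n) ℂ}
    (h : A.IsHermitian)
    (hr : n - (k - p + 1) < (A - lam k A • (1 : Matrix (Fin n) (Fin n) ℂ)).rank) (hpk : p ≤ k) :
    lam k A < lam p A := by
  by_contra hne
  have hpk' : (p : ℕ) ≤ k := hpk
  have hlt : ∀ j, p ≤ j → j ≤ k → lam j A = lam k A := fun j h1 h2 =>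
    le_antisymm ((lam_anti A h1).trans (not_lt.1 hne)) (lam_anti A h2)
  rw [rank_sub h, Fintype.card_subtype_compl] at hr
  have h1 : (k - p + 1 : ℕ) ≤ Fintype.card {j : Fin (Fintype.card (Fin n)) // lam j A = lam k A} := by
    have := Fintype.card_le_of_injective
      (fun j : Fin (k - p + 1 : ℕ) => (⟨⟨p + j.1, by have := j.2; have := k.2; omega⟩,
        hlt _ (Fin.le_def.2 (by simp)) (Fin.le_def.2 (by have := j.2; simp; omega))⟩ :
          {j : Fin (Fintype.card (Fin n)) // lam j A = lam k A}))
      (fun a b hab => by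
        have := congrArg (fun z => (z.1 : ℕ)) hab
        simp at this
        exact Fin.ext this)
    simpa using this
  simp only [Fintype.card_fin] at hr h1
  omega

lemma contDiff_det' {E : Type*} [NormedAddCommGroup E] [NormedSpace ℝ E] {c : ℕ}
    (A : E → Matrix (Fin c) (Fin c) ℂ) (h : ∀ i j, ContDiff ℝ 1 (fun p => A p i j)) :
    ContDiff ℝ 1 (fun p => (A p).det) := by
  simp only [Matrix.det_apply]
  refine ContDiff.sum fun σ _ => ?_
  refine ContDiff.const_smul _ ?_
  exact contDiff_prod fun i _ => h _ _

lemma contDiffAt_inv_entry {E : Type*} [NormedAddCommGroup E] [NormedSpace ℝ E] {c : ℕ}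
    (A : E → Matrix (Fin c) (Fin c) ℂ) (h : ∀ i j, ContDiff ℝ 1 (fun p => A p i j))
    (p : E) (hp : (A p).det ≠ 0) (a b : Fin c) :
    ContDiffAt ℝ 1 (fun p => (A p)⁻¹ a b) p := by
  have h1 : ∀ p, (A p)⁻¹ a b = ((A p).det)⁻¹ * (A p).adjugate a b := by
    intro p; rw [Matrix.inv_def]; simp
  simp only [h1]
  refine ContDiffAt.mul ((contDiff_det' A h).contDiffAt.inv hp) ?_
  simp only [Matrix.adjugate_apply]
  refine (contDiff_det' _ ?_).contDiffAt
  intro i j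
  simp only [Matrix.updateRow_apply]
  split_ifs
  · exact contDiff_const
  · exact h _ _

/-- the affine family of matrices -/
noncomputable def fam {n : ℕ} {κ : Type*} [Fintype κ] (C : Matrix (Fin n) (Fin n) ℂ)
    (B : κ → Matrix (Fin n) (Fin n) ℂ) (D : Fin n → ℝ) (t : κ → ℝ) : Matrix (Fin n) (Fin n) ℂ :=
  C + Matrix.diagonal (fun i => (D i : ℂ)) + ∑ j, t j • B j

lemma fam_apply_ne {n : ℕ} {κ : Type*} [Fintype κ] (C : Matrix (Fin n) (Fin n) ℂ)
    (B : κ → Matrix (Fin n) (Fin n) ℂ) (D D' : Fin n → ℝ) (t : κ → ℝ) (i j : Fin n)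
    (h : i = j → D i = D' i) : fam C B D t i j = fam C B D' t i j := by
  unfold fam
  simp only [Matrix.add_apply, Matrix.diagonal_apply]
  congr 2
  split_ifs with hij
  · rw [h hij]
  · rfl

lemma exists_max_minor {n : ℕ} (h : Matrix (Fin n) (Fin n) ℂ) :
    ∃ c : ℕ, ∃ g : Fin c → Fin n, (h.submatrix g g).det ≠ 0 ∧
      ∀ g' : Fin (c + 1) → Fin n, (h.submatrix g' g').det = 0 := by
  by_contra hcon
  push Not at hcon
  have : ∀ c, ∃ g : Fin c → Fin n, (h.submatrix g g).det ≠ 0 := by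
    intro c
    induction c with
    | zero => exact ⟨Fin.elim0, by simp⟩
    | succ c ih =>
      obtain ⟨g, hg⟩ := ih
      exact hcon c g hg
  obtain ⟨g, hg⟩ := this (n + 1)
  have hinj : ¬ Function.Injective g := by
    intro hi
    have := Fintype.card_le_of_injective g hi
    simp at this
  rw [Function.not_injective_iff] at hinj
  obtain ⟨a, b, hab, hne⟩ := hinj
  exact hg (Matrix.det_zero_of_row_eq hne (by ext j; simp [hab]))

lemma schur_zero {n c : ℕ} (h : Matrix (Fin n) (Fin n) ℂ) (g : Fin c → Fin n)
    (hg : (h.submatrix g g).det ≠ 0)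
    (hmax : ∀ g' : Fin (c + 1) → Fin n, (h.submatrix g' g').det = 0) (i : Fin n) :
    h i i = ∑ a, ∑ b, h i (g a) * (h.submatrix g g)⁻¹ a b * h (g b) i := by
  let g2 : Fin c ⊕ Fin 1 → Fin n := Sum.elim g (fun _ => i)
  have h1 : (h.submatrix g2 g2).det = 0 := by
    rw [← hmax (g2 ∘ finSumFinEquiv.symm), ← Matrix.submatrix_submatrix,
      Matrix.det_submatrix_equiv_self]
  have h2 : h.submatrix g2 g2 = Matrix.fromBlocks (h.submatrix g g) (h.submatrix g (fun _ => i))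
      (h.submatrix (fun _ => i) g) (h.submatrix (fun _ : Fin 1 => i) (fun _ : Fin 1 => i)) := by
    ext a b
    rcases a with a | a <;> rcases b with b | b <;> rfl
  have : Invertible (h.submatrix g g) :=
    ((h.submatrix g g).isUnit_iff_isUnit_det.2 (isUnit_iff_ne_zero.2 hg)).invertible
  rw [h2, Matrix.det_fromBlocks₁₁, mul_eq_zero, or_iff_right hg, Matrix.det_fin_one,
    Matrix.sub_apply, sub_eq_zero, Matrix.invOf_eq_nonsing_inv] at h1
  simp only [Matrix.submatrix_apply] at h1
  rw [h1, Matrix.mul_apply]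
  simp only [Matrix.mul_apply, Finset.sum_mul, Matrix.submatrix_apply]
  rw [Finset.sum_comm]

open Classical in
/-- extension of a partial diagonal by zero -/
noncomputable def extD {n c : ℕ} (g : Fin c → Fin n) (x : Fin c → ℝ) (i : Fin n) : ℝ :=
  if h : ∃ a, g a = i then x h.choose else 0

open Classical in
/-- parametrisation of the bad diagonals -/
noncomputable def parD {n : ℕ} {κ : Type*} [Fintype κ] (C : Matrix (Fin n) (Fin n) ℂ)
    (B : κ → Matrix (Fin n) (Fin n) ℂ) {c : ℕ} (g : Fin c → Fin n)
    (p : (Fin c → ℝ) × (κ → ℝ)) (i : Fin n) : ℝ :=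
  if ∃ a, g a = i then extD g p.1 i else
    ((∑ a, ∑ b, fam C B (extD g p.1) p.2 i (g a) *
      ((fam C B (extD g p.1) p.2).submatrix g g)⁻¹ a b * fam C B (extD g p.1) p.2 (g b) i) -
      fam C B (extD g p.1) p.2 i i).re

lemma contDiff_extD {n c : ℕ} {κ : Type*} [Fintype κ] (g : Fin c → Fin n) (i : Fin n) :
    ContDiff ℝ 1 (fun p : (Fin c → ℝ) × (κ → ℝ) => extD g p.1 i) := by
  unfold extD
  split_ifs <;> fun_prop

lemma contDiff_fam {n : ℕ} {κ : Type*} [Fintype κ] (C : Matrix (Fin n) (Fin n) ℂ)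
    (B : κ → Matrix (Fin n) (Fin n) ℂ) {c : ℕ} (g : Fin c → Fin n) (i j : Fin n) :
    ContDiff ℝ 1 (fun p : (Fin c → ℝ) × (κ → ℝ) => fam C B (extD g p.1) p.2 i j) := by
  unfold fam
  simp only [Matrix.add_apply, Matrix.diagonal_apply, Matrix.sum_apply, Matrix.smul_apply]
  refine ContDiff.add (ContDiff.add contDiff_const ?_) ?_
  · split_ifs
    · exact Complex.ofRealCLM.contDiff.comp (contDiff_extD g i)
    · exact contDiff_const
  · refine ContDiff.sum fun k _ => ?_
    have hk : ContDiff ℝ 1 (fun p : (Fin c → ℝ) × (κ → ℝ) => p.2 k) := by fun_prop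
    exact hk.smul contDiff_const

lemma contDiffAt_parD {n : ℕ} {κ : Type*} [Fintype κ] (C : Matrix (Fin n) (Fin n) ℂ)
    (B : κ → Matrix (Fin n) (Fin n) ℂ) {c : ℕ} (g : Fin c → Fin n)
    (p : (Fin c → ℝ) × (κ → ℝ))
    (hp : ((fam C B (extD g p.1) p.2).submatrix g g).det ≠ 0) :
    ContDiffAt ℝ 1 (parD C B g) p := by
  rw [contDiffAt_pi]
  intro i
  unfold parD
  split_ifs
  · exact (contDiff_extD g i).contDiffAt
  · refine Complex.reCLM.contDiff.contDiffAt.comp p (ContDiffAt.sub ?_ (contDiff_fam ..).contDiffAt)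
    refine ContDiffAt.sum fun a _ => ContDiffAt.sum fun b _ => ?_
    refine ContDiffAt.mul (ContDiffAt.mul (contDiff_fam ..).contDiffAt ?_)
      (contDiff_fam ..).contDiffAt
    exact contDiffAt_inv_entry _ (fun i j => contDiff_fam C B g (g i) (g j)) p hp a b

lemma mem_parD {n : ℕ} {κ : Type*} [Fintype κ] (C : Matrix (Fin n) (Fin n) ℂ)
    (B : κ → Matrix (Fin n) (Fin n) ℂ) (q : ℕ) (D : Fin n → ℝ) (t : κ → ℝ)
    (hr : (fam C B D t).rank ≤ q) :
    ∃ c : Fin (q + 1), ∃ g : Fin c → Fin n,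
      D ∈ parD C B g '' {p | ((fam C B (extD g p.1) p.2).submatrix g g).det ≠ 0} := by
  obtain ⟨c, g, hg, hmax⟩ := exists_max_minor (fam C B D t)
  have hc : c ≤ q := by
    have h1 := Matrix.rank_submatrix_le (fam C B D t) g g
    rw [Matrix.rank_of_isUnit _ (((fam C B D t).submatrix g g).isUnit_iff_isUnit_det.2
      (isUnit_iff_ne_zero.2 hg))] at h1
    simp at h1
    omega
  have hD : ∀ i, (∃ a, g a = i) → extD g (D ∘ g) i = D i := by
    intro i hi
    unfold extD
    rw [dif_pos hi]
    exact congrArg D hi.choose_spec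
  have hsub : (fam C B (extD g (D ∘ g)) t).submatrix g g = (fam C B D t).submatrix g g := by
    ext a b
    exact fam_apply_ne _ _ _ _ _ _ _ (fun _ => hD _ ⟨a, rfl⟩)
  refine ⟨⟨c, by omega⟩, g, (D ∘ g, t), ?_, ?_⟩
  · simp only [Set.mem_ofPred_eq]
    rw [hsub]; exact hg
  · ext i
    unfold parD
    simp only
    split_ifs with hi
    · exact hD i hi
    · have hi' : ∀ a, g a ≠ i := fun a ha => hi ⟨a, ha⟩
      rw [hsub]
      have h1 : ∀ a, fam C B (extD g (D ∘ g)) t i (g a) = fam C B D t i (g a) := fun a =>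
        fam_apply_ne _ _ _ _ _ _ _ (fun h => absurd h.symm (hi' a))
      have h2 : ∀ a, fam C B (extD g (D ∘ g)) t (g a) i = fam C B D t (g a) i := fun a =>
        fam_apply_ne _ _ _ _ _ _ _ (fun h => absurd h (hi' a))
      simp only [h1, h2]
      rw [← schur_zero _ g hg hmax i]
      have : extD g (D ∘ g) i = 0 := by unfold extD; rw [dif_neg hi]
      simp [fam, this]

lemma dimH_bad {n : ℕ} {κ : Type*} [Fintype κ] (C : Matrix (Fin n) (Fin n) ℂ)
    (B : κ → Matrix (Fin n) (Fin n) ℂ) (q : ℕ) :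
    dimH {D : Fin n → ℝ | ∃ t : κ → ℝ, (fam C B D t).rank ≤ q} ≤
      ((q + Fintype.card κ : ℕ) : ENNReal) := by
  have hsub : {D : Fin n → ℝ | ∃ t : κ → ℝ, (fam C B D t).rank ≤ q} ⊆
      ⋃ c : Fin (q + 1), ⋃ g : Fin c → Fin n,
        parD C B g '' {p | ((fam C B (extD g p.1) p.2).submatrix g g).det ≠ 0} := by
    rintro D ⟨t, ht⟩
    simp only [Set.mem_iUnion]
    exact mem_parD C B q D t ht
  refine (dimH_mono hsub).trans ?_
  rw [dimH_iUnion]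
  refine iSup_le fun c => ?_
  rw [dimH_iUnion]
  refine iSup_le fun g => ?_
  refine (dimH_image_le_of_locally_lipschitzOn ?_).trans ?_
  · intro p hp
    obtain ⟨K, s, hs, hL⟩ := (contDiffAt_parD C B g p hp).exists_lipschitzOnWith
    exact ⟨K, s, mem_nhdsWithin_of_mem_nhds hs, hL⟩
  · refine (dimH_mono (Set.subset_univ _)).trans ?_
    rw [Real.dimH_univ_eq_finrank]
    have := c.2
    simp
    omega

/-- Density of good diagonals for finitely many families. -/
lemma exists_good {n : ℕ} {I : Type*} [Finite I] (κ : I → Type*) [∀ i, Fintype (κ i)]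
    (C : Matrix (Fin n) (Fin n) ℂ) (B : ∀ i, κ i → Matrix (Fin n) (Fin n) ℂ) (q : ℕ)
    (hq : ∀ i, q + Fintype.card (κ i) < n) (ε : ℝ) (hε : 0 < ε) :
    ∃ D : Fin n → ℝ, ‖D‖ < ε ∧ ∀ i, ∀ t : κ i → ℝ, q < (fam C (B i) D t).rank := by
  have hd : Dense (⋃ i, {D : Fin n → ℝ | ∃ t : κ i → ℝ, (fam C (B i) D t).rank ≤ q})ᶜ := by
    rcases isEmpty_or_nonempty I with hI | hI
    · simp
    apply dense_compl_of_dimH_lt_finrank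
    rw [dimH_iUnion]
    cases nonempty_fintype I
    obtain ⟨i, hi⟩ := Finite.exists_max (fun i => Fintype.card (κ i))
    refine lt_of_le_of_lt (b := ((q + Fintype.card (κ i) : ℕ) : ENNReal))
      (iSup_le fun j => (dimH_bad C (B j) q).trans ?_) ?_
    · have := hi j
      exact_mod_cast (by omega)
    · have := hq i
      simp only [Module.finrank_fintype_fun_eq_card, Fintype.card_fin]
      exact_mod_cast this
  obtain ⟨D, hD, hb⟩ := hd.exists_dist_lt (0 : Fin n → ℝ) hε
  refine ⟨D, by simpa [dist_eq_norm] using hb, fun i t => ?_⟩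
  by_contra hcon
  exact hD (Set.mem_iUnion.2 ⟨i, t, not_lt.1 hcon⟩)

lemma rank_smul_lt {n : ℕ} (A : Matrix (Fin n) (Fin n) ℂ) (w : ℝ) (hw : w ≠ 0) (q : ℕ)
    (h : q < A.rank) : q < (w • A).rank := by
  have h1 : A = (w⁻¹ • (1 : Matrix (Fin n) (Fin n) ℂ)) * (w • A) := by
    simp [smul_smul, hw]
  have h2 := Matrix.rank_mul_le_right (w⁻¹ • (1 : Matrix (Fin n) (Fin n) ℂ)) (w • A)
  rw [← h1] at h2
  omega

lemma generic_vertices {n : ℕ} {ι : Type*} [Fintype ι] (c : ι → Matrix (Fin n) (Fin n) ℂ)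
    (ε : ℝ) (hε : 0 < ε) (d q : ℕ) (hq : q + d + 1 < n) :
    ∃ D : ι → Fin n → ℝ, (∀ i, ‖D i‖ < ε) ∧
      ∀ T : Finset ι, T.Nonempty → T.card ≤ d + 1 → ∀ w : ι → ℝ, (∀ i ∈ T, w i ≠ 0) →
        ∀ s : ℝ, q < (∑ i ∈ T, w i • (c i + Matrix.diagonal (fun a => (D i a : ℂ)))
          - s • (1 : Matrix (Fin n) (Fin n) ℂ)).rank := by
  classical
  suffices h : ∀ S : Finset ι, ∃ D : ι → Fin n → ℝ, (∀ i, ‖D i‖ < ε) ∧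
      ∀ T : Finset ι, T ⊆ S → T.Nonempty → T.card ≤ d + 1 → ∀ w : ι → ℝ, (∀ i ∈ T, w i ≠ 0) →
        ∀ s : ℝ, q < (∑ i ∈ T, w i • (c i + Matrix.diagonal (fun a => (D i a : ℂ)))
          - s • (1 : Matrix (Fin n) (Fin n) ℂ)).rank by
    obtain ⟨D, h1, h2⟩ := h Finset.univ
    exact ⟨D, h1, fun T => h2 T (Finset.subset_univ _)⟩
  intro S
  induction S using Finset.induction_on with
  | empty =>
    refine ⟨fun _ => 0, fun i => by simpa using hε, fun T hT hne => ?_⟩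
    exact absurd (Finset.subset_empty.1 hT) hne.ne_empty
  | insert i0 S hi0 ih =>
    obtain ⟨D, hD, hgood⟩ := ih
    obtain ⟨D0, hD0, hgood0⟩ := exists_good (I := {T : Finset ι // T.card ≤ d})
      (fun T => Option T.1) (c i0)
      (fun T o => o.elim 1 (fun i => c i + Matrix.diagonal (fun a => (D i a : ℂ)))) q
      (fun T => by have := T.2; simp; omega) ε hε
    refine ⟨Function.update D i0 D0, fun i => ?_, fun T hT hne hcard w hw s => ?_⟩
    · by_cases h : i = i0
      · subst h; simpa using hD0
      · simpa [h] using hD i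
    · have hagree : ∀ T' : Finset ι, i0 ∉ T' →
          ∑ i ∈ T', w i • (c i + Matrix.diagonal (fun a => ((Function.update D i0 D0) i a : ℂ))) =
          ∑ i ∈ T', w i • (c i + Matrix.diagonal (fun a => (D i a : ℂ))) := by
        intro T' hT'
        refine Finset.sum_congr rfl fun i hi => ?_
        have : i ≠ i0 := fun h => hT' (h ▸ hi)
        rw [Function.update_of_ne this]
      by_cases hmem : i0 ∈ T
      · have hc' : (T.erase i0).card ≤ d := by
          rw [Finset.card_erase_of_mem hmem]; omega
        have key := hgood0 ⟨T.erase i0, hc'⟩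
          (fun o => o.elim (-s / w i0) (fun i => w i / w i0))
        have hw0 := hw i0 hmem
        have := rank_smul_lt _ (w i0) hw0 q key
        convert this using 2
        rw [← Finset.add_sum_erase T _ hmem, hagree _ (Finset.notMem_erase _ _)]
        unfold fam
        rw [Fintype.sum_option]
        simp only [Option.elim, Function.update_self]
        rw [Finset.sum_coe_sort (T.erase i0) (fun i => (w i / w i0) •
          (c i + Matrix.diagonal (fun a => (D i a : ℂ))))]
        rw [smul_add (w i0) (_ + _), smul_add (w i0) (_ • _), Finset.smul_sum, smul_smul]
        have e1 : w i0 * (-s / w i0) = -s := by field_simp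
        have e2 : ∀ i, w i0 * (w i / w i0) = w i := fun i => by field_simp
        simp only [smul_smul, e1, e2, neg_smul]
        abel
      · rw [hagree T hmem]
        refine hgood T ?_ hne hcard w hw s
        exact (Finset.subset_insert_iff_of_notMem hmem).1 hT

lemma pl_approx {X : Type*} [MetricSpace X] [CompactSpace X] (d : ℕ) (hdim : HasCovDimLE X d)
    {n : ℕ} (q : ℕ) (hq : q + d + 1 < n) (m : C(X, Matrix (Fin n) (Fin n) ℂ))
    (hm : ∀ x, (m x).IsHermitian) (ε : ℝ) (hε : 0 < ε) :
    ∃ m' : C(X, Matrix (Fin n) (Fin n) ℂ), (∀ x, dist (m' x) (m x) < ε) ∧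
      (∀ x, (m' x).IsHermitian) ∧
      ∀ x, ∀ s : ℝ, q < (m' x - s • (1 : Matrix (Fin n) (Fin n) ℂ)).rank := by
  classical
  obtain ⟨𝒱, hVo, hVc, hVr, hVd⟩ := hdim
    (Set.range fun x => m ⁻¹' Metric.ball (m x) (ε / 2))
    (by rintro U ⟨x, rfl⟩; exact Metric.isOpen_ball.preimage m.continuous)
    (by
      refine Set.eq_univ_of_forall fun x => ?_
      exact ⟨_, ⟨x, rfl⟩, Metric.mem_ball_self (half_pos hε)⟩)
  obtain ⟨t, ht⟩ := isCompact_univ.elim_finite_subcover (fun V : 𝒱 => V.1) (fun V => hVo _ V.2)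
    (by rw [← Set.sUnion_eq_iUnion, hVc])
  have hcen : ∀ i : t, ∃ x : X, (i.1.1 : Set X) ⊆ m ⁻¹' Metric.ball (m x) (ε / 2) := by
    intro i
    obtain ⟨U, ⟨x, rfl⟩, hU⟩ := hVr _ i.1.2
    exact ⟨x, hU⟩
  choose cen hcen using hcen
  obtain ⟨f, hf⟩ := PartitionOfUnity.exists_isSubordinate (X := X) isClosed_univ
    (fun i : t => (i.1.1 : Set X)) (fun i => hVo _ i.1.2) (by
      intro x hx
      have := ht hx
      simp only [Set.mem_iUnion] at this ⊢
      obtain ⟨V, hV, hxV⟩ := this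
      exact ⟨⟨V, hV⟩, hxV⟩)
  obtain ⟨D, hD, hgen⟩ := generic_vertices (fun i : t => m (cen i)) (ε / 2) (half_pos hε) d q hq
  let v : t → Matrix (Fin n) (Fin n) ℂ := fun i =>
    m (cen i) + Matrix.diagonal (fun a => (D i a : ℂ))
  have hv : ∀ i, (v i).IsHermitian := fun i => by
    refine (hm _).add ?_
    rw [Matrix.isHermitian_diagonal_iff]
    intro a
    exact Complex.conj_ofReal _
  have hmem : ∀ i x, f i x ≠ 0 → x ∈ (i.1.1 : Set X) := fun i x hx =>
    hf i (subset_tsupport _ hx)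
  let T : X → Finset t := fun x => Finset.univ.filter fun i => f i x ≠ 0
  have hsum1 : ∀ x, ∑ i ∈ T x, f i x = 1 := by
    intro x
    have := f.sum_eq_one (Set.mem_univ x)
    rw [finsum_eq_sum_of_fintype] at this
    rw [Finset.sum_filter_ne_zero, this]
  have hsum : ∀ x, ∑ i, f i x • v i = ∑ i ∈ T x, f i x • v i := by
    intro x
    symm
    refine Finset.sum_subset (Finset.subset_univ _) fun i _ hi => ?_
    have : f i x = 0 := by simpa [T] using hi
    simp [this]
  refine ⟨⟨fun x => ∑ i, f i x • v i, ?_⟩, fun x => ?_, fun x => ?_, fun x s => ?_⟩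
  · exact continuous_finsetSum _ fun i _ => (f i).continuous.smul continuous_const
  · simp only [ContinuousMap.coe_mk]
    rw [hsum, ← Metric.mem_ball]
    refine (convex_ball (m x) ε).sum_mem (fun i _ => f.nonneg i x) (hsum1 x) fun i hi => ?_
    have hx : x ∈ (i.1.1 : Set X) := hmem i x (by simpa [T] using hi)
    have h1 : dist (m x) (m (cen i)) < ε / 2 := hcen i hx
    have h2 : dist (v i) (m (cen i)) < ε / 2 := by
      simp only [v]
      rw [dist_eq_norm, add_sub_cancel_left, Matrix.l2_opNorm_diagonal]
      refine lt_of_le_of_lt ?_ (hD i)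
      refine (pi_norm_le_iff_of_nonneg (norm_nonneg _)).2 fun a => ?_
      rw [Complex.norm_real]
      exact norm_le_pi_norm (D i) a
    rw [Metric.mem_ball]
    have := dist_triangle_right (v i) (m x) (m (cen i))
    linarith
  · simp only [ContinuousMap.coe_mk]
    have : IsSelfAdjoint (∑ i, f i x • v i) := by
      refine isSelfAdjoint_sum _ fun i _ => ?_
      exact (IsSelfAdjoint.all (f i x)).smul (show IsSelfAdjoint (v i) from hv i)
    exact this
  · simp only [ContinuousMap.coe_mk]
    rw [hsum]
    refine hgen (T x) ?_ ?_ (fun i => f i x) (fun i hi => by simpa [T] using hi) s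
    · rw [Finset.nonempty_iff_ne_empty]
      intro h
      have := hsum1 x
      rw [h] at this
      simp at this
    · refine le_trans ?_ (hVd x).2
      rw [← Set.ncard_coe_finset]
      refine Set.ncard_le_ncard_of_injOn (fun i : t => (i.1.1 : Set X)) ?_ ?_ (hVd x).1
      · intro i hi
        exact ⟨i.1.2, hmem i x (by simpa [T] using hi)⟩
      · intro i _ j _ h
        exact Subtype.ext (Subtype.ext h)

lemma exists_herm_ext {X : Type*} [MetricSpace X] [CompactSpace X] (Y : Set X) (hY : IsClosed Y)
    {n : ℕ} (a : C(Y, Matrix (Fin n) (Fin n) ℂ)) (ha : ∀ y, (a y).PosSemidef) :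
    ∃ m : C(X, Matrix (Fin n) (Fin n) ℂ), (∀ x, (m x).IsHermitian) ∧
      ∀ (y : X) (hy : y ∈ Y), m y = a ⟨y, hy⟩ := by
  have : TietzeExtension (Matrix (Fin n) (Fin n) ℂ) :=
    inferInstanceAs (TietzeExtension (Fin n → Fin n → ℂ))
  obtain ⟨g, hg⟩ := ContinuousMap.exists_restrict_eq hY a
  refine ⟨⟨fun x => symM (g x), continuous_symM.comp g.continuous⟩, fun x => symM_herm _, ?_⟩
  intro y hy
  have : g y = a ⟨y, hy⟩ := by rw [← hg]; rfl
  simp only [ContinuousMap.coe_mk, this]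
  exact symM_eq (ha _).1

lemma continuous_pp : Continuous (fun A : Matrix (Fin n) (Fin n) ℂ =>
    cfc (fun x : ℝ => max x 0) (symM A)) := by
  refine Continuous.cfc_of_mem_nhdsSet (s := Set.univ) _ Filter.univ_mem continuous_symM
    (fun A => symM_herm A) (by fun_prop)

lemma pp_eq {A : Matrix (Fin n) (Fin n) ℂ} (h : A.PosSemidef) :
    cfc (fun x : ℝ => max x 0) (symM A) = A := by
  have h' : IsSelfAdjoint A := h.1
  rw [symM_eq h.1]
  conv_rhs => rw [← cfc_id' ℝ A]
  refine cfc_congr fun x hx => ?_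
  rw [h.1.spectrum_real_eq_range_eigenvalues] at hx
  obtain ⟨i, rfl⟩ := hx
  simpa using h.eigenvalues_nonneg i

lemma pp_psd (A : Matrix (Fin n) (Fin n) ℂ) :
    (cfc (fun x : ℝ => max x 0) (symM A)).PosSemidef := by
  open scoped MatrixOrder in
  have : 0 ≤ cfc (fun x : ℝ => max x 0) (symM A) := cfc_nonneg (fun x _ => le_max_right _ _)
  exact Matrix.nonneg_iff_posSemidef.1 this


theorem stmt7_aux {X : Type*} [MetricSpace X] [CompactSpace X] (d : ℕ) (hdim : IsCovDim X d)
    (Y : Set X) (hY : IsClosed Y)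
    (n l k : ℕ) (hn : 0 < n) (hkn : k ≤ n) (hlk : l + 4 * d ≤ k)
    (a : C(Y, Matrix (Fin n) (Fin n) ℂ)) (ha : ∀ y, (a y).PosSemidef)
    (harank : ∀ y : Y, l ≤ (a y).rank ∧ (a y).rank ≤ k) :
    ∃ b : C(X, Matrix (Fin n) (Fin n) ℂ),
      (∀ x, (b x).PosSemidef) ∧
      (∀ (y : X) (hy : y ∈ Y), b y = a ⟨y, hy⟩) ∧
      (∀ x : X, l ≤ (b x).rank ∧ (b x).rank ≤ k) := by
  obtain ⟨M, hM, hMa⟩ := exists_herm_ext Y hY a ha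
  rcases hkn.eq_or_lt with hkn | hkn
  · subst hkn
    rcases Y.eq_empty_or_nonempty with hYe | hYne
    · subst hYe
      refine ⟨ContinuousMap.const X 1, fun x => Matrix.PosSemidef.one, fun y hy => hy.elim,
        fun x => ?_⟩
      simp only [ContinuousMap.const_apply, Matrix.rank_one, Fintype.card_fin]
      omega
    · refine ⟨⟨fun x => cfc (fun x : ℝ => max x 0) (symM (M x)) +
        Metric.infDist x Y • (1 : Matrix (Fin k) (Fin k) ℂ), ?_⟩, fun x => ?_, fun y hy => ?_,
        fun x => ⟨?_, ?_⟩⟩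
      · exact (continuous_pp.comp M.continuous).add
          ((Metric.continuous_infDist_pt Y).smul continuous_const)
      · exact (pp_psd _).add (Matrix.PosSemidef.one.smul Metric.infDist_nonneg)
      · simp only [ContinuousMap.coe_mk]
        rw [hMa y hy, pp_eq (ha _), Metric.infDist_zero_of_mem hy]; simp
      · simp only [ContinuousMap.coe_mk]
        by_cases hx : x ∈ Y
        · rw [hMa x hx, pp_eq (ha _), Metric.infDist_zero_of_mem hx]
          simpa using (harank ⟨x, hx⟩).1
        · have hpos : 0 < Metric.infDist x Y := (hY.notMem_iff_infDist_pos hYne).1 hx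
          have hpd : (cfc (fun x : ℝ => max x 0) (symM (M x)) +
              Metric.infDist x Y • (1 : Matrix (Fin k) (Fin k) ℂ)).PosDef :=
            Matrix.PosDef.posSemidef_add (pp_psd _) (Matrix.PosDef.one.smul hpos)
          rw [Matrix.rank_of_isUnit _ hpd.isUnit, Fintype.card_fin]
          omega
      · exact (Matrix.rank_le_width _)
  · have hcard : Fintype.card (Fin n) = n := Fintype.card_fin n
    let kk : Fin (Fintype.card (Fin n)) := ⟨k, by omega⟩
    rcases Nat.eq_zero_or_pos l with hl | hl
    · subst hl
      refine ⟨⟨fun x => cut kk (M x), (continuous_cut kk).comp M.continuous⟩,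
        fun x => cut_posSemidef _ _, fun y hy => ?_, fun x => ⟨Nat.zero_le _, ?_⟩⟩
      · simp only [ContinuousMap.coe_mk]
        rw [hMa y hy]
        exact cut_of_rank (ha _) kk (harank _).2
      · exact rank_cut_le kk (hM x)
    · let pp : Fin (Fintype.card (Fin n)) := ⟨l - 1, by omega⟩
      have hppkk : pp ≤ kk := Fin.le_def.2 (by simp only [pp, kk]; omega)
      let G : Set (Matrix (Fin n) (Fin n) ℂ) := {A | lam kk A < lam pp A}
      have hG : IsOpen G := isOpen_lt (continuous_lam kk) (continuous_lam pp)
      have hYG : Y ⊆ M ⁻¹' G := by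
        intro y hy
        change lam kk (M y) < lam pp (M y)
        rw [hMa y hy, lam_zero_of_rank (ha _) kk (harank _).2]
        refine lam_pos_of_rank (ha _) pp ?_
        have := (harank ⟨y, hy⟩).1
        simp only [pp]; omega
      obtain ⟨V, hVo, hYV, hVG⟩ := normal_exists_closure_subset hY (hG.preimage M.continuous) hYG
      have hcomp : IsCompact (M '' closure V) := isClosed_closure.isCompact.image M.continuous
      obtain ⟨δ, hδ, hthick⟩ := hcomp.exists_thickening_subset_open hG (Set.image_subset_iff.2 hVG)
      obtain ⟨m', hm'd, hm'h, hm'r⟩ := pl_approx d hdim.1 (n - (k - (l - 1) + 1)) (by omega) M hM δ hδ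
      obtain ⟨ψ, hψ0, hψ1, hψ⟩ := exists_continuous_zero_one_of_isClosed hY hVo.isClosed_compl
        (Set.disjoint_compl_right_iff_subset.2 hYV)
      let N : X → Matrix (Fin n) (Fin n) ℂ := fun x => M x + ψ x • (m' x - M x)
      have hNc : Continuous N :=
        M.continuous.add (ψ.continuous.smul (m'.continuous.sub M.continuous))
      have hNh : ∀ x, (N x).IsHermitian := fun x => by
        have h1 : IsSelfAdjoint (M x) := hM x
        have h2 : IsSelfAdjoint (m' x) := hm'h x
        exact h1.add ((IsSelfAdjoint.all (ψ x)).smul (h2.sub h1))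
      have hNG : ∀ x, lam kk (N x) < lam pp (N x) := by
        intro x
        by_cases hx : x ∈ V
        · apply hthick
          rw [Metric.mem_thickening_iff]
          refine ⟨M x, ⟨x, subset_closure hx, rfl⟩, ?_⟩
          simp only [N]
          rw [dist_eq_norm, add_sub_cancel_left, norm_smul, Real.norm_eq_abs, abs_of_nonneg (hψ x).1]
          have h1 := hm'd x
          rw [dist_eq_norm] at h1
          have h2 := (hψ x).2
          nlinarith [norm_nonneg (m' x - M x)]
        · have h1 : ψ x = 1 := hψ1 hx
          have h2 : N x = m' x := by simp [N, h1]
          rw [h2]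
          exact gap_of_rank kk pp (hm'h x) (hm'r x _) hppkk
      refine ⟨⟨fun x => cut kk (N x), (continuous_cut kk).comp hNc⟩,
        fun x => cut_posSemidef _ _, fun y hy => ?_, fun x => ⟨?_, ?_⟩⟩
      · have h1 : ψ y = 0 := hψ0 hy
        have h2 : N y = a ⟨y, hy⟩ := by simp [N, h1, hMa y hy]
        simp only [ContinuousMap.coe_mk]
        rw [h2]
        exact cut_of_rank (ha _) kk (harank _).2
      · have := le_rank_cut kk pp (hNh x) (hNG x)
        have hp : (pp : ℕ) = l - 1 := rfl
        simp only [ContinuousMap.coe_mk]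
        omega
      · exact rank_cut_le kk (hNh x)

end Helpers

/-- If `X` is a compact metric space of finite covering dimension `d`,
`Y ⊆ X` is closed, `k ≤ n`, `k - l ≥ 4d`, and `a ∈ M_n(C(Y))` is positive with pointwise
rank in `[l, k]`, then `a` extends to a positive `b ∈ M_n(C(X))` with pointwise rank in
`[l, k]`. -/
theorem stmt7 {X : Type*} [MetricSpace X] [CompactSpace X] (d : ℕ) (hdim : IsCovDim X d)
    (Y : Set X) (hY : IsClosed Y)
    (n l k : ℕ) (hn : 0 < n) (hkn : k ≤ n) (hlk : l + 4 * d ≤ k)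
    (a : C(Y, Matrix (Fin n) (Fin n) ℂ)) (ha : ∀ y, (a y).PosSemidef)
    (harank : ∀ y : Y, l ≤ (a y).rank ∧ (a y).rank ≤ k) :
    ∃ b : C(X, Matrix (Fin n) (Fin n) ℂ),
      (∀ x, (b x).PosSemidef) ∧
      (∀ (y : X) (hy : y ∈ Y), b y = a ⟨y, hy⟩) ∧
      (∀ x : X, l ≤ (b x).rank ∧ (b x).rank ≤ k) := by
  exact stmt7_aux d hdim Y hY n l k hn hkn hlk a ha harank
end

section
/- Let X be a compact metric space of finite covering dimension d, let Y ⊆ X be closed, and let n be a positive integer. Let f, g : X → ℤ≥0 be bounded functions with f lower semicontinuous, g upper semicontinuous, f(x) − g(x) ≥ 4d for every x ∈ X, and f(x) ≤ n for every x ∈ X. Suppose a ∈ M_n(C(Y)) is positive and satisfies g(y) ≤ rank(a(y)) ≤ f(y) for all y ∈ Y. Then there is a positive element b ∈ M_n(C(X)) such that b restricted to Y equals a and g(x) ≤ rank(b(x)) ≤ f(x) for all x ∈ X. -/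
open scoped ComplexOrder

namespace RankExt

section matrix
open scoped Matrix.Norms.L2Operator

variable {n : ℕ}

/-- every function is continuous on the spectrum -/
lemma contOn_spec (M : Matrix (Fin n) (Fin n) ℂ) (q : ℝ → ℝ) : ContinuousOn q (spectrum ℝ M) :=
  (Matrix.finite_real_spectrum).continuousOn q

lemma cfc_mul' (M : Matrix (Fin n) (Fin n) ℂ) (p q : ℝ → ℝ) :
    cfc p M * cfc q M = cfc (fun s => p s * q s) M :=
  (cfc_mul p q M (contOn_spec M p) (contOn_spec M q)).symm

open Classical in
lemma rank_cfc {M : Matrix (Fin n) (Fin n) ℂ} (hM : M.IsHermitian) (q : ℝ → ℝ) :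
    (cfc q M).rank = (Finset.univ.filter fun i => q (hM.eigenvalues i) ≠ 0).card := by
  rw [hM.cfc_eq, Matrix.IsHermitian.cfc, Unitary.conjStarAlgAut_apply]
  rw [Matrix.rank_mul_eq_left_of_isUnit_det, Matrix.rank_mul_eq_right_of_isUnit_det,
    Matrix.rank_diagonal, Fintype.card_subtype]
  · simp
  · exact (Matrix.isUnit_iff_isUnit_det _).1 ⟨Unitary.toUnits hM.eigenvectorUnitary, rfl⟩
  · exact (Matrix.isUnit_iff_isUnit_det _).1 ⟨Unitary.toUnits (star hM.eigenvectorUnitary), rfl⟩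

lemma cfc_congr_ev {M : Matrix (Fin n) (Fin n) ℂ} (hM : M.IsHermitian) {p q : ℝ → ℝ}
    (h : ∀ i, p (hM.eigenvalues i) = q (hM.eigenvalues i)) : cfc p M = cfc q M := by
  apply cfc_congr
  intro s hs
  rw [hM.spectrum_real_eq_range_eigenvalues] at hs
  obtain ⟨i, rfl⟩ := hs
  exact h i

lemma psd_cfc {M : Matrix (Fin n) (Fin n) ℂ} (hM : M.IsHermitian) {q : ℝ → ℝ}
    (h : ∀ i, 0 ≤ q (hM.eigenvalues i)) : (cfc q M).PosSemidef := by
  rw [hM.cfc_eq, Matrix.IsHermitian.cfc, Unitary.conjStarAlgAut_apply]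
  apply Matrix.PosSemidef.mul_mul_conjTranspose_same
  rw [Matrix.posSemidef_diagonal_iff]
  intro i
  simpa using h i

/-- `(M - t)₊` -/
noncomputable def cut (M : Matrix (Fin n) (Fin n) ℂ) (t : ℝ) : Matrix (Fin n) (Fin n) ℂ :=
  cfc (fun s : ℝ => max (s - t) 0) M

lemma cut_eq {M : Matrix (Fin n) (Fin n) ℂ} (hM : M.IsHermitian) (t : ℝ) :
    cut M t = cfc (fun s : ℝ => max s 0) (M - t • 1) := by
  have h : M - t • 1 = cfc (fun s : ℝ => s - t) M := by
    have hM' : IsSelfAdjoint M := hM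
    rw [cfc_sub .., cfc_id' ℝ M, cfc_const .., Algebra.algebraMap_eq_smul_one]
  rw [h, cut, ← cfc_comp' (fun s : ℝ => max s 0) (fun s => s - t) M]

lemma continuous_pp {X : Type*} [TopologicalSpace X] {b : X → Matrix (Fin n) (Fin n) ℂ}
    (hb : Continuous b) (hh : ∀ x, (b x).IsHermitian) :
    Continuous fun x => cfc (fun s : ℝ => max s 0) (b x) := by
  refine Continuous.cfc_of_mem_nhdsSet (s := Set.univ) _ Filter.univ_mem hb (fun x => hh x) ?_
  fun_prop

lemma isHermitian_sub_smul {M : Matrix (Fin n) (Fin n) ℂ} (hM : M.IsHermitian) (t : ℝ) :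
    (M - t • 1).IsHermitian := by
  refine hM.sub ?_
  have : IsSelfAdjoint (t • (1 : Matrix (Fin n) (Fin n) ℂ)) := by
    simp [isSelfAdjoint_iff]
  exact this

lemma continuous_cut {X : Type*} [TopologicalSpace X] {b : X → Matrix (Fin n) (Fin n) ℂ}
    (hb : Continuous b) (hh : ∀ x, (b x).IsHermitian) {t : X → ℝ} (ht : Continuous t) :
    Continuous fun x => cut (b x) (t x) := by
  simp only [fun x => cut_eq (hh x) (t x)]
  refine continuous_pp (hb.sub (ht.smul continuous_const)) fun x => isHermitian_sub_smul (hh x) _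

lemma cut_zero {M : Matrix (Fin n) (Fin n) ℂ} (hM : M.PosSemidef) : cut M 0 = M := by
  have hM' : IsSelfAdjoint M := hM.1
  rw [cut, cfc_congr_ev hM.1 (q := id)]
  · exact cfc_id ℝ M
  · intro i
    simpa using hM.eigenvalues_nonneg i

lemma psd_cut {M : Matrix (Fin n) (Fin n) ℂ} (hM : M.IsHermitian) (t : ℝ) : (cut M t).PosSemidef :=
  psd_cfc hM fun i => by simp

open Classical in
lemma rank_cut {M : Matrix (Fin n) (Fin n) ℂ} (hM : M.IsHermitian) (t : ℝ) :
    (cut M t).rank = (Finset.univ.filter fun i => t < hM.eigenvalues i).card := by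
  rw [cut, rank_cfc hM]
  congr 1
  ext i
  simp only [Finset.mem_filter, Finset.mem_univ, true_and]
  constructor
  · intro h
    by_contra h'
    exact h (max_eq_right (by linarith))
  · intro h
    rw [max_eq_left (by linarith)]
    linarith

lemma rank_cut_anti {M : Matrix (Fin n) (Fin n) ℂ} (hM : M.IsHermitian) {s t : ℝ} (h : s ≤ t) :
    (cut M t).rank ≤ (cut M s).rank := by
  classical
  rw [rank_cut hM, rank_cut hM]
  apply Finset.card_le_card
  intro i
  simp only [Finset.mem_filter, Finset.mem_univ, true_and]
  exact fun h' => lt_of_le_of_lt h h'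

/-- distance to matrices of rank at most `k`; equals the `(k+1)`-st eigenvalue. -/
noncomputable def D (k : ℕ) (M : Matrix (Fin n) (Fin n) ℂ) : ℝ :=
  Metric.infDist M {R | R.rank ≤ k}

lemma continuous_D (k : ℕ) : Continuous (D k : Matrix (Fin n) (Fin n) ℂ → ℝ) :=
  Metric.continuous_infDist_pt _

lemma D_nonneg (k : ℕ) (M : Matrix (Fin n) (Fin n) ℂ) : 0 ≤ D k M := Metric.infDist_nonneg

lemma D_eq_zero {k : ℕ} {M : Matrix (Fin n) (Fin n) ℂ} (h : M.rank ≤ k) : D k M = 0 :=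
  Metric.infDist_zero_of_mem h

lemma lt_rank_cut {k : ℕ} {M : Matrix (Fin n) (Fin n) ℂ} (hM : M.PosSemidef) {t : ℝ} (ht : 0 ≤ t)
    (h : t < D k M) : k < (cut M t).rank := by
  by_contra h'
  push Not at h'
  have h1 : D k M ≤ dist M (cut M t) := Metric.infDist_le_dist_of_mem h'
  have hM' : IsSelfAdjoint M := hM.1
  have h2 : M - cut M t = cfc (fun s : ℝ => s - max (s - t) 0) M := by
    rw [cfc_sub _ _ M (contOn_spec M _) (contOn_spec M _), cfc_id' ℝ M, cut]
  have h3 : ‖M - cut M t‖ ≤ t := by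
    rw [h2]
    apply norm_cfc_le ht
    intro s hs
    rw [hM.1.spectrum_real_eq_range_eigenvalues] at hs
    obtain ⟨i, rfl⟩ := hs
    have := hM.eigenvalues_nonneg i
    rw [Real.norm_eq_abs, abs_le]
    rcases le_total (hM.1.eigenvalues i - t) 0 with h | h
    · rw [max_eq_right h]; constructor <;> linarith
    · rw [max_eq_left h]; constructor <;> linarith
  rw [dist_eq_norm] at h1
  linarith

lemma rank_cut_le {k : ℕ} {M : Matrix (Fin n) (Fin n) ℂ} (hM : M.PosSemidef) {t : ℝ} (ht : 0 ≤ t)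
    (h : D k M ≤ t) : (cut M t).rank ≤ k := by
  classical
  by_contra hlt
  push Not at hlt
  -- a gap above t
  obtain ⟨t', htt', ht'⟩ : ∃ t' > t, ∀ i, t < hM.1.eigenvalues i → t' ≤ hM.1.eigenvalues i := by
    rcases (Finset.univ.filter fun i => t < hM.1.eigenvalues i).eq_empty_or_nonempty with he | hne
    · refine ⟨t + 1, by linarith, fun i hi => ?_⟩
      have : i ∈ (Finset.univ.filter fun i => t < hM.1.eigenvalues i) := by simp [hi]
      rw [he] at this
      simp at this
    · obtain ⟨i0, hi0, hmin⟩ := Finset.exists_min_image _ hM.1.eigenvalues hne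
      refine ⟨hM.1.eigenvalues i0, by simpa using hi0, fun i hi => hmin i (by simp [hi])⟩
  have ht'0 : 0 < t' := lt_of_le_of_lt ht htt'
  have hM' : IsSelfAdjoint M := hM.1
  set q : ℝ → ℝ := fun s => if t < s then s⁻¹ else 0 with hq
  have hqn : ‖cfc q M‖ ≤ t'⁻¹ := by
    apply norm_cfc_le (by positivity)
    intro s hs
    rw [hM.1.spectrum_real_eq_range_eigenvalues] at hs
    obtain ⟨i, rfl⟩ := hs
    simp only [hq]
    split_ifs with h1
    · have := ht' i h1
      rw [norm_inv, Real.norm_eq_abs, abs_of_pos (by linarith)]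
      exact inv_anti₀ ht'0 this
    · simp [ht'0.le]
  have hqM : cfc q M * M * cut M t = cut M t := by
    conv_lhs => rw [← cfc_id' ℝ M]
    rw [cfc_id' ℝ M, cut]
    conv_lhs => enter [1, 2]; rw [← cfc_id' ℝ M]
    rw [cfc_mul', cfc_mul']
    apply cfc_congr_ev hM.1
    intro i
    simp only [hq]
    split_ifs with h1
    · rw [inv_mul_cancel₀ (by linarith), one_mul]
    · rw [max_eq_right (by linarith)]; simp
  have hle : t' ≤ D k M := by
    refine (Metric.le_infDist ⟨0, by simp⟩).2 fun R hR => ?_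
    have hR : R.rank ≤ k := hR
    -- find vector
    obtain ⟨v, hvV, hvR, hv0⟩ : ∃ v ∈ LinearMap.range (cut M t).mulVecLin, R.mulVec v = 0 ∧ v ≠ 0 := by
      have h1 := Submodule.finrank_sup_add_finrank_inf_eq (LinearMap.range (cut M t).mulVecLin) (LinearMap.ker R.mulVecLin)
      have h2 := LinearMap.finrank_range_add_finrank_ker R.mulVecLin
      have h3 : Module.finrank ℂ (Fin n → ℂ) = n := by simp
      have h4 : R.rank = Module.finrank ℂ (LinearMap.range R.mulVecLin) := rfl
      have h5 : (cut M t).rank = Module.finrank ℂ (LinearMap.range (cut M t).mulVecLin) := rfl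
      have h8 := Submodule.finrank_le (LinearMap.range (cut M t).mulVecLin ⊔ LinearMap.ker R.mulVecLin)
      have h6 : 0 < Module.finrank ℂ (LinearMap.range (cut M t).mulVecLin ⊓ LinearMap.ker R.mulVecLin : Submodule ℂ (Fin n → ℂ)) := by
        omega
      have h7 := Module.finrank_pos_iff_exists_ne_zero.1 h6
      obtain ⟨⟨v, hv1, hv2⟩, hv⟩ := h7
      refine ⟨v, hv1, by simpa using hv2, fun h => hv (by ext1; exact h)⟩
    obtain ⟨u, rfl⟩ := hvV
    set v := (cut M t).mulVecLin u with hv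
    have e1 : (cfc q M).mulVec ((M - R).mulVec v) = v := by
      rw [Matrix.sub_mulVec, hvR, sub_zero, hv, Matrix.mulVecLin_apply, Matrix.mulVec_mulVec, Matrix.mulVec_mulVec, hqM]
    have e2 := Matrix.l2_opNorm_mulVec (M - R) (WithLp.toLp 2 v)
    have e3 := Matrix.l2_opNorm_mulVec (cfc q M) (WithLp.toLp 2 ((M - R).mulVec v))
    have e4 : ‖WithLp.toLp 2 v‖ ≤ ‖cfc q M‖ * ‖WithLp.toLp 2 ((M - R).mulVec v)‖ := by
      rw [← e1] ; 
      rw [e1]; exact le_of_eq_of_le (by simp [e1]) e3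
    have e5 : ‖WithLp.toLp 2 ((M - R).mulVec v)‖ ≤ ‖M - R‖ * ‖WithLp.toLp 2 v‖ := e2
    have hvp : 0 < ‖WithLp.toLp 2 v‖ := by
      rw [norm_pos_iff]
      intro h
      apply hv0
      simpa using h
    rw [dist_eq_norm]
    have e6 : ‖WithLp.toLp 2 v‖ ≤ t'⁻¹ * (‖M - R‖ * ‖WithLp.toLp 2 v‖) :=
      e4.trans (mul_le_mul hqn e5 (norm_nonneg _) (by positivity))
    have e7 : t' * ‖WithLp.toLp 2 v‖ ≤ ‖M - R‖ * ‖WithLp.toLp 2 v‖ := by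
      calc t' * ‖WithLp.toLp 2 v‖ ≤ t' * (t'⁻¹ * (‖M - R‖ * ‖WithLp.toLp 2 v‖)) := by gcongr
        _ = _ := by rw [← mul_assoc, mul_inv_cancel₀ ht'0.ne', one_mul]
    exact le_of_mul_le_mul_right e7 hvp
  linarith

end matrix

section genpos

lemma exists_avoid {d : ℕ} {κ : Type*} (S : Finset κ) (W : κ → Submodule ℂ (Fin (d + 1) → ℂ))
    (hW : ∀ k ∈ S, W k ≠ ⊤) (y : Fin (d + 1) → ℂ) {η : ℝ} (hη : 0 < η) :
    ∃ z, dist z y < η ∧ ∀ k ∈ S, z ∉ W k := by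
  have h : Dense (⋂ k ∈ (S : Set κ), ((W k : Set (Fin (d + 1) → ℂ))ᶜ)) := by
    apply dense_biInter_of_isOpen
    · intro k _
      exact (Submodule.closed_of_finiteDimensional (W k)).isOpen_compl
    · exact S.countable_toSet
    · intro k hk
      rw [← interior_eq_empty_iff_dense_compl]
      by_contra hne
      exact hW k hk (Submodule.eq_top_of_nonempty_interior' _ (Set.nonempty_iff_ne_empty.2 hne))
  obtain ⟨z, hz, hz'⟩ := h.exists_dist_lt y hη
  refine ⟨z, by rwa [dist_comm], fun k hk => ?_⟩
  simp only [Set.mem_iInter] at hz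
  exact hz k hk

lemma exists_genpos {d : ℕ} {ι : Type*} (s : Finset ι) (y : ι → Fin (d + 1) → ℂ) {η : ℝ}
    (hη : 0 < η) :
    ∃ u : ι → Fin (d + 1) → ℂ, (∀ i, dist (u i) (y i) < η) ∧
      ∀ T ⊆ s, T.card ≤ d + 1 → LinearIndepOn ℂ u (T : Set ι) := by
  classical
  induction s using Finset.induction_on with
  | empty =>
    refine ⟨y, fun i => by simpa using hη, fun T hT _ => ?_⟩
    rw [Finset.subset_empty.1 hT]
    simp
  | insert a s ha ih =>
    obtain ⟨u, hu, hT⟩ := ih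
    obtain ⟨z, hz, hz'⟩ := exists_avoid (d := d) (s.powerset.filter fun T => T.card ≤ d)
      (fun T => Submodule.span ℂ (u '' (T : Set ι))) (by
        intro T hT h
        simp only [Finset.mem_filter] at hT
        have h1 := finrank_span_finset_le_card (R := ℂ) (T.image u)
        rw [Finset.coe_image] at h1
        rw [Set.finrank, h, finrank_top] at h1
        have h2 : (T.image u).card ≤ T.card := Finset.card_image_le
        simp at h1
        omega) (y a) hη
    have hag : ∀ T : Finset ι, T ⊆ s → Set.EqOn (Function.update u a z) u (T : Set ι) := by
      intro T hTs i hi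
      have hne : i ≠ a := by
        rintro rfl
        exact ha (hTs hi)
      exact Function.update_of_ne hne _ _
    refine ⟨Function.update u a z, ?_, ?_⟩
    · intro i
      rcases eq_or_ne i a with rfl | h
      · simpa using hz
      · simpa [Function.update_of_ne h] using hu i
    · intro T hTs hc
      by_cases haT : a ∈ T
      · have h1 : T.erase a ⊆ s := by
          intro i hi
          have := hTs (Finset.mem_of_mem_erase hi)
          rcases Finset.mem_insert.1 this with h | h
          · exact absurd h (Finset.ne_of_mem_erase hi)
          · exact h
        have hcard := Finset.card_erase_of_mem haT
        rw [← Finset.insert_erase haT, Finset.coe_insert, linearIndepOn_insert (by simp)]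
        constructor
        · rw [linearIndepOn_congr (hag _ h1)]
          exact hT _ h1 (by omega)
        · rw [Set.image_congr (hag _ h1), Function.update_self]
          exact hz' _ (by simp only [Finset.mem_filter, Finset.mem_powerset]; exact ⟨h1, by omega⟩)
      · have h1 : T ⊆ s := (Finset.subset_insert_iff_of_notMem haT).1 hTs
        rw [linearIndepOn_congr (hag _ h1)]
        exact hT _ h1 hc

lemma exists_nowhere_zero {X : Type*} [MetricSpace X] [CompactSpace X] {d : ℕ}
    (hd : HasCovDimLE X d) (s0 : C(X, Fin (d + 1) → ℂ)) {η : ℝ} (hη : 0 < η) :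
    ∃ s1 : C(X, Fin (d + 1) → ℂ), (∀ x, dist (s1 x) (s0 x) < η) ∧ ∀ x, s1 x ≠ 0 := by
  classical
  obtain ⟨𝒱, hVo, hVc, hVr, hVn⟩ := hd (Set.range fun p : X => s0 ⁻¹' Metric.ball (s0 p) (η / 2))
    (by rintro _ ⟨p, rfl⟩; exact Metric.isOpen_ball.preimage s0.continuous)
    (by
      rw [Set.eq_univ_iff_forall]
      intro p
      exact ⟨_, ⟨p, rfl⟩, by simp [hη]⟩)
  obtain ⟨t, htV, htf, htc⟩ := isCompact_univ.elim_finite_subcover_image (b := 𝒱) (c := id)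
    (fun V hV => hVo V hV) (by rw [← hVc, Set.sUnion_eq_biUnion]; rfl)
  have : Fintype t := htf.fintype
  obtain ⟨φ, hφ⟩ := PartitionOfUnity.exists_isSubordinate (X := X) isClosed_univ
    (fun V : t => (V : Set X)) (fun V => hVo _ (htV V.2)) (by
      intro x _
      have := htc (Set.mem_univ x)
      simp only [Set.mem_iUnion, id] at this
      obtain ⟨V, hV, hx⟩ := this
      exact Set.mem_iUnion.2 ⟨⟨V, hV⟩, hx⟩)
  have hc : ∀ V : t, ∃ p : X, (V : Set X) ⊆ s0 ⁻¹' Metric.ball (s0 p) (η / 2) := by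
    intro V
    obtain ⟨_, ⟨p, rfl⟩, h⟩ := hVr V (htV V.2)
    exact ⟨p, h⟩
  choose p hp using hc
  obtain ⟨u, hu, hui⟩ := exists_genpos (Finset.univ : Finset t) (fun V => s0 (p V)) (half_pos hη)
  have hmem : ∀ (V : t) (x : X), φ V x ≠ 0 → x ∈ (V : Set X) := by
    intro V x hx
    exact hφ V (subset_tsupport _ hx)
  have hsum : ∀ x, ∑ V, φ V x = 1 := by
    intro x
    rw [← finsum_eq_sum_of_fintype]
    exact φ.sum_eq_one (Set.mem_univ x)
  refine ⟨⟨fun x => ∑ V, φ V x • u V, by fun_prop⟩, fun x => ?_, fun x hx => ?_⟩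
  · have hconv := convex_ball (s0 x) η
    set T := Finset.univ.filter fun V => φ V x ≠ 0 with hT
    have h1 : ∑ V, φ V x • u V = ∑ V ∈ T, φ V x • u V := by
      rw [hT, Finset.sum_filter_of_ne]
      intro V _ h h0
      simp [h0] at h
    have h2 : ∑ V ∈ T, φ V x = 1 := by
      rw [← hsum x, hT, Finset.sum_filter_of_ne]
      intro V _ h 
      exact h
    have h3 := hconv.sum_mem (t := T) (w := fun V => φ V x) (z := u) (fun V _ => φ.nonneg V x) h2 (by
      intro V hV
      have hV : φ V x ≠ 0 := by simpa [hT] using hV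
      have h4 := hp V (hmem V x hV)
      have h5 := hu V
      have h6 : dist (s0 x) (s0 (p V)) < η / 2 := h4
      rw [Metric.mem_ball]
      calc dist (u V) (s0 x) ≤ dist (u V) (s0 (p V)) + dist (s0 x) (s0 (p V)) := dist_triangle_right _ _ _
        _ < η := by linarith)
    rw [← h1] at h3
    exact h3
  · set T := Finset.univ.filter fun V => φ V x ≠ 0 with hT
    have hx : ∑ V, φ V x • u V = 0 := hx
    have h1 : ∑ V, φ V x • u V = ∑ V ∈ T, (φ V x : ℂ) • u V := by
      rw [hT, Finset.sum_filter_of_ne]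
      · exact Finset.sum_congr rfl fun V _ => by ext; simp
      · intro V _ h h0
        simp [h0] at h
    have hcard : T.card ≤ d + 1 := by
      refine le_trans ?_ (hVn x).2
      rw [← Set.ncard_coe_finset, ← Set.ncard_image_of_injective (T : Set t) Subtype.val_injective]
      apply Set.ncard_le_ncard _ (hVn x).1
      rintro _ ⟨V, hV, rfl⟩
      exact ⟨htV V.2, hmem V x (by simpa [hT] using hV)⟩
    have h2 := hui T (Finset.subset_univ _) hcard
    rw [linearIndepOn_finset_iff] at h2
    have h3 := h2 (fun V => (φ V x : ℂ)) (by rw [← h1, hx])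
    have h4 : ∑ V, φ V x = 0 := by
      apply Finset.sum_eq_zero
      intro V _
      by_contra h
      have := h3 V (by simp [hT, h])
      exact h (by exact_mod_cast this)
    rw [hsum x] at h4
    exact one_ne_zero h4

end genpos

section sections

lemma exists_PQ {n k : ℕ} (C : Matrix (Fin n) (Fin n) ℂ) (hk : k ≤ C.rank) :
    ∃ (P : Matrix (Fin k) (Fin n) ℂ) (Q : Matrix (Fin n) (Fin k) ℂ), P * C * Q = 1 := by
  obtain ⟨V, U, e, -, -, h⟩ := Matrix.exists_rank_normal_form C
  let σ : Fin k → Fin n := fun i => e.symm (Sum.inl (Fin.castLE hk i))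
  refine ⟨V.submatrix σ id, U.submatrix id σ, ?_⟩
  have h1 : V.submatrix σ id * C * U.submatrix id σ = (V * C * U).submatrix σ σ := by
    ext i j
    simp [Matrix.mul_apply]
  rw [h1, h]
  ext i j
  simp [σ, Matrix.one_apply]

lemma isOpen_good {X : Type*} [MetricSpace X] [CompactSpace X] {n : ℕ}
    {C : X → Matrix (Fin n) (Fin n) ℂ} (hC : Continuous C) {Z : Set X} (hZ : IsCompact Z) :
    IsOpen {w : C(X, Fin n → ℂ) | ∀ x ∈ Z, (C x).mulVec (w x) ≠ 0} := by
  have hU : IsOpen {q : X × (Fin n → ℂ) | (C q.1).mulVec q.2 ≠ 0} := by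
    apply isOpen_ne_fun
    · exact (hC.comp continuous_fst).matrix_mulVec continuous_snd
    · exact continuous_const
  have h := (ContinuousMap.isOpen_setOfPred_mapsTo hZ hU)
  have hc : Continuous fun w : C(X, Fin n → ℂ) => (ContinuousMap.id X).prodMk w := by
    apply ContinuousMap.continuous_of_continuous_uncurry
    exact Continuous.prodMk continuous_snd continuous_eval
  exact h.preimage hc

lemma dense_good {X : Type*} [MetricSpace X] [CompactSpace X] {d : ℕ}
    (hd : HasCovDimLE X d) {n : ℕ} {C : X → Matrix (Fin n) (Fin n) ℂ} (hC : Continuous C)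
    (x0 : X) (h0 : d + 1 ≤ (C x0).rank) :
    ∃ Z : Set X, Z ∈ nhds x0 ∧ IsClosed Z ∧
      Dense {w : C(X, Fin n → ℂ) | ∀ x ∈ Z, (C x).mulVec (w x) ≠ 0} := by
  obtain ⟨P, Q, hPQ⟩ := exists_PQ (C x0) h0
  set A : X → Matrix (Fin (d + 1)) (Fin (d + 1)) ℂ := fun x => P * C x * Q with hA
  have hAc : Continuous A := (continuous_const.matrix_mul hC).matrix_mul continuous_const
  have hdc : Continuous fun x => (A x).det := hAc.matrix_det
  have hU : {x | (A x).det ≠ 0} ∈ nhds x0 := by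
    apply (isOpen_ne_fun hdc continuous_const).mem_nhds
    simp [hA, hPQ]
  obtain ⟨Z, hZn, hZc, hZU⟩ := exists_mem_nhds_isClosed_subset hU
  refine ⟨Z, hZn, hZc, ?_⟩
  rw [Metric.dense_iff]
  intro w0 η hη
  obtain ⟨s0, hs0⟩ := ContinuousMap.exists_restrict_eq hZc
    (⟨fun x : Z => ((A x).det)⁻¹ • (A x).adjugate.mulVec (P.mulVec ((C x).mulVec (w0 x))), by
      apply Continuous.fun_smul
      · exact (hdc.comp continuous_subtype_val).inv₀ fun x => hZU x.2
      · apply Continuous.matrix_mulVec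
        · exact (hAc.comp continuous_subtype_val).matrix_adjugate
        · apply Continuous.matrix_mulVec continuous_const
          apply Continuous.matrix_mulVec (hC.comp continuous_subtype_val)
          exact w0.continuous.comp continuous_subtype_val⟩ : C(Z, Fin (d + 1) → ℂ))
  have hs0' : ∀ x ∈ Z, (A x).mulVec (s0 x) = P.mulVec ((C x).mulVec (w0 x)) := by
    intro x hx
    have h1 := DFunLike.congr_fun hs0 ⟨x, hx⟩
    simp only [ContinuousMap.restrict_apply, ContinuousMap.coe_mk] at h1
    rw [h1, Matrix.mulVec_smul, Matrix.mulVec_mulVec, Matrix.mul_adjugate, Matrix.smul_mulVec,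
      Matrix.one_mulVec, smul_smul, inv_mul_cancel₀ (hZU hx), one_smul]
  have hQc : Continuous fun v : Fin (d + 1) → ℂ => Q.mulVec v :=
    continuous_const.matrix_mulVec continuous_id
  obtain ⟨η', hη', hQ⟩ := Metric.continuous_iff.1 hQc 0 η hη
  obtain ⟨s1, hs1, hs1'⟩ := exists_nowhere_zero hd s0 hη'
  refine ⟨w0 + ⟨fun x => Q.mulVec (s1 x - s0 x), hQc.comp (s1.continuous.sub s0.continuous)⟩, ?_, ?_⟩
  · rw [Metric.mem_ball, ContinuousMap.dist_lt_iff hη]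
    intro x
    have := hQ (s1 x - s0 x) (by rw [dist_zero_right, ← dist_eq_norm]; exact hs1 x)
    rw [Matrix.mulVec_zero, dist_zero_right] at this
    simpa [dist_eq_norm] using this
  · intro x hx hzero
    apply hs1' x
    have h1 : (A x).mulVec (s1 x) = 0 := by
      have h2 : P.mulVec ((C x).mulVec (w0 x + Q.mulVec (s1 x - s0 x))) = 0 := by
        have h3 : (C x).mulVec (w0 x + Q.mulVec (s1 x - s0 x)) = 0 := hzero
        rw [h3, Matrix.mulVec_zero]
      rw [Matrix.mulVec_add, Matrix.mulVec_add, ← hs0' x hx] at h2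
      simp only [Matrix.mulVec_mulVec, ← Matrix.mul_assoc] at h2
      rw [← Matrix.mulVec_add] at h2
      simpa using h2
    exact Matrix.eq_zero_of_mulVec_eq_zero (hZU hx) h1

lemma exists_section {X : Type*} [MetricSpace X] [CompactSpace X] {d : ℕ}
    (hd : HasCovDimLE X d) {n : ℕ} {C : X → Matrix (Fin n) (Fin n) ℂ} (hC : Continuous C)
    (O : Set X) (hO : ∀ x ∈ O, d + 1 ≤ (C x).rank) :
    ∃ w : C(X, Fin n → ℂ), ∀ x ∈ O, (C x).mulVec (w x) ≠ 0 := by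
  classical
  have h : ∀ x : X, ∃ Z : Set X, x ∈ O → (Z ∈ nhds x ∧ IsClosed Z ∧
      Dense {w : C(X, Fin n → ℂ) | ∀ x ∈ Z, (C x).mulVec (w x) ≠ 0}) := by
    intro x
    by_cases hx : x ∈ O
    · obtain ⟨Z, hZ⟩ := dense_good hd hC x (hO x hx)
      exact ⟨Z, fun _ => hZ⟩
    · exact ⟨∅, fun h => absurd h hx⟩
  choose Z hZ using h
  obtain ⟨t, htO, htc, hcov⟩ := TopologicalSpace.countable_cover_nhdsWithin (f := Z) (s := O)
    (fun x hx => mem_nhdsWithin_of_mem_nhds (hZ x hx).1)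
  have hD := dense_biInter_of_isOpen (S := t)
    (f := fun x0 => {w : C(X, Fin n → ℂ) | ∀ x ∈ Z x0, (C x).mulVec (w x) ≠ 0})
    (fun x hx => isOpen_good hC (hZ x (htO hx)).2.1.isCompact) htc (fun x hx => (hZ x (htO hx)).2.2)
  obtain ⟨w, hw⟩ := hD.nonempty
  simp only [Set.mem_iInter] at hw
  refine ⟨w, fun x hx => ?_⟩
  obtain ⟨x0, hx0, hxx⟩ := Set.mem_iUnion₂.1 (hcov hx)
  exact hw x0 hx0 x hxx

end sections

section step
open scoped Matrix.Norms.L2Operator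

variable {n : ℕ}

lemma rank_le_of_ker {A B : Matrix (Fin n) (Fin n) ℂ}
    (h : ∀ u, A.mulVec u = 0 → B.mulVec u = 0) : B.rank ≤ A.rank := by
  have h1 := LinearMap.finrank_range_add_finrank_ker A.mulVecLin
  have h2 := LinearMap.finrank_range_add_finrank_ker B.mulVecLin
  have h3 : Module.finrank ℂ (LinearMap.ker A.mulVecLin) ≤ Module.finrank ℂ (LinearMap.ker B.mulVecLin) :=
    Submodule.finrank_mono fun u hu => by simpa using h u (by simpa using hu)
  have h4 : A.rank = Module.finrank ℂ (LinearMap.range A.mulVecLin) := rfl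
  have h5 : B.rank = Module.finrank ℂ (LinearMap.range B.mulVecLin) := rfl
  omega

lemma rank_add_le' (A B : Matrix (Fin n) (Fin n) ℂ) : (A + B).rank ≤ A.rank + B.rank := by
  have h : LinearMap.range (A + B).mulVecLin ≤
      LinearMap.range A.mulVecLin ⊔ LinearMap.range B.mulVecLin := by
    rintro _ ⟨u, rfl⟩
    rw [Matrix.mulVecLin_add, LinearMap.add_apply]
    exact Submodule.add_mem_sup ⟨u, rfl⟩ ⟨u, rfl⟩
  exact (Submodule.finrank_mono h).trans (Submodule.finrank_add_le_finrank_add_finrank _ _)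

lemma rank_lt_of_ker {A B : Matrix (Fin n) (Fin n) ℂ}
    (h : ∀ u, A.mulVec u = 0 → B.mulVec u = 0) (v : Fin n → ℂ) (hv : B.mulVec v = 0)
    (hv' : A.mulVec v ≠ 0) : B.rank < A.rank := by
  have h1 := LinearMap.finrank_range_add_finrank_ker A.mulVecLin
  have h2 := LinearMap.finrank_range_add_finrank_ker B.mulVecLin
  have h3 : Module.finrank ℂ (LinearMap.ker A.mulVecLin) < Module.finrank ℂ (LinearMap.ker B.mulVecLin) := by
    apply Submodule.finrank_lt_finrank_of_lt
    refine lt_of_le_of_ne (fun u hu => by simpa using h u (by simpa using hu)) fun he => ?_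
    have : v ∈ LinearMap.ker B.mulVecLin := by simpa using hv
    rw [← he] at this
    exact hv' (by simpa using this)
  have h4 : A.rank = Module.finrank ℂ (LinearMap.range A.mulVecLin) := rfl
  have h5 : B.rank = Module.finrank ℂ (LinearMap.range B.mulVecLin) := rfl
  omega

lemma ker_add {A B : Matrix (Fin n) (Fin n) ℂ} (hA : A.PosSemidef) (hB : B.PosSemidef)
    {u : Fin n → ℂ} (h : (A + B).mulVec u = 0) : A.mulVec u = 0 ∧ B.mulVec u = 0 := by
  have h1 := hA.dotProduct_mulVec_nonneg u
  have h2 := hB.dotProduct_mulVec_nonneg u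
  have h3 : star u ⬝ᵥ A.mulVec u + star u ⬝ᵥ B.mulVec u = 0 := by
    rw [← dotProduct_add, ← Matrix.add_mulVec, h, dotProduct_zero]
  obtain ⟨h4, h5⟩ := (add_eq_zero_iff_of_nonneg h1 h2).1 h3
  exact ⟨(hA.dotProduct_mulVec_zero_iff u).1 h4, (hB.dotProduct_mulVec_zero_iff u).1 h5⟩

noncomputable def cc (M : Matrix (Fin n) (Fin n) ℂ) (τ h : ℝ) : Matrix (Fin n) (Fin n) ℂ :=
  cfc (fun s : ℝ => max (τ - s) 0 * (s + h)) M

lemma cc_eq {M : Matrix (Fin n) (Fin n) ℂ} (hM : M.IsHermitian) (τ h : ℝ) :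
    cc M τ h = cfc (fun s : ℝ => max s 0) (-(M - τ • 1)) * (M + h • 1) := by
  have hM' : IsSelfAdjoint M := hM
  have h1 : -(M - τ • 1) = cfc (fun s : ℝ => τ - s) M := by
    rw [cfc_sub .., cfc_id' ℝ M, cfc_const .., Algebra.algebraMap_eq_smul_one, neg_sub]
  have h2 : M + h • 1 = cfc (fun s : ℝ => s + h) M := by
    rw [cfc_add .., cfc_id' ℝ M, cfc_const .., Algebra.algebraMap_eq_smul_one]
  rw [h1, h2, ← cfc_comp' (fun s : ℝ => max s 0) (fun s => τ - s) M, cfc_mul', cc]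

lemma continuous_cc {X : Type*} [TopologicalSpace X] {b : X → Matrix (Fin n) (Fin n) ℂ}
    (hb : Continuous b) (hh : ∀ x, (b x).IsHermitian) (τ : ℝ) {h : X → ℝ} (ht : Continuous h) :
    Continuous fun x => cc (b x) τ (h x) := by
  simp only [fun x => cc_eq (hh x) τ (h x)]
  refine Continuous.mul ?_ (hb.add (ht.smul continuous_const))
  exact continuous_pp (hb.sub continuous_const).neg fun x => (isHermitian_sub_smul (hh x) _).neg

lemma rank_le_of_D {k : ℕ} {M : Matrix (Fin n) (Fin n) ℂ} (hM : M.PosSemidef) (h : D k M ≤ 0) :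
    M.rank ≤ k := by
  have := rank_cut_le hM le_rfl h
  rwa [cut_zero hM] at this

lemma rank_cc {M : Matrix (Fin n) (Fin n) ℂ} (hM : M.PosSemidef) {j d : ℕ} {τ ε : ℝ}
    (hτ : D j M < τ) (hε : 0 < ε) (hn : j + d + 1 ≤ n) :
    d + 1 ≤ (cc M τ (max (ε - D (j + d) M) 0)).rank := by
  classical
  rw [cc, rank_cfc hM.1]
  have h1 := rank_cut_le hM (D_nonneg j M) le_rfl
  rw [rank_cut hM.1] at h1
  set S := Finset.univ.filter fun i => D j M < hM.1.eigenvalues i with hS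
  rcases le_or_gt (ε - D (j + d) M) 0 with h | h
  · rw [max_eq_right h]
    have h2 : j + d < M.rank := by
      by_contra h'
      push Not at h'
      have := D_eq_zero h'
      linarith
    rw [← cut_zero hM, rank_cut hM.1] at h2
    set T := Finset.univ.filter fun i => 0 < hM.1.eigenvalues i with hT
    have h3 : T \ S ⊆ Finset.univ.filter fun i =>
        max (τ - hM.1.eigenvalues i) 0 * (hM.1.eigenvalues i + 0) ≠ 0 := by
      intro i hi
      simp only [hT, hS, Finset.mem_sdiff, Finset.mem_filter, Finset.mem_univ, true_and, not_lt] at hi ⊢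
      rw [max_eq_left (by linarith)]
      apply mul_ne_zero <;> linarith
    have h4 := Finset.card_le_card h3
    have h5 := Finset.le_card_sdiff S T
    omega
  · rw [max_eq_left h.le]
    have h3 : Finset.univ \ S ⊆ Finset.univ.filter fun i =>
        max (τ - hM.1.eigenvalues i) 0 * (hM.1.eigenvalues i + (ε - D (j + d) M)) ≠ 0 := by
      intro i hi
      simp only [hS, Finset.mem_sdiff, Finset.mem_filter, Finset.mem_univ, true_and, not_lt] at hi ⊢
      have := hM.eigenvalues_nonneg i
      rw [max_eq_left (by linarith)]
      apply mul_ne_zero <;> linarith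
    have h4 := Finset.card_le_card h3
    have h5 := Finset.le_card_sdiff S Finset.univ
    rw [Finset.card_univ, Fintype.card_fin] at h5
    omega

/-- the modified matrix -/
noncomputable def BB (M : Matrix (Fin n) (Fin n) ℂ) (τ ε h : ℝ) (w : Fin n → ℂ) :
    Matrix (Fin n) (Fin n) ℂ :=
  cut M ε + Matrix.vecMulVec (ε • (cc M τ h).mulVec w) (star (ε • (cc M τ h).mulVec w))

lemma psd_BB {M : Matrix (Fin n) (Fin n) ℂ} (hM : M.PosSemidef) (τ ε h : ℝ) (w : Fin n → ℂ) :
    (BB M τ ε h w).PosSemidef :=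
  (psd_cut hM.1 ε).add (Matrix.posSemidef_vecMulVec_self_star _)

lemma BB_zero {M : Matrix (Fin n) (Fin n) ℂ} (hM : M.PosSemidef) (τ h : ℝ) (w : Fin n → ℂ) :
    BB M τ 0 h w = M := by
  simp [BB, cut_zero hM]

lemma rank_BB_ge {M : Matrix (Fin n) (Fin n) ℂ} (hM : M.PosSemidef) {τ ε h : ℝ} {w : Fin n → ℂ}
    (hε : 0 < ε) (hτ : ε < τ) (hw : (cc M τ h).mulVec w ≠ 0) :
    (cut M τ).rank < (BB M τ ε h w).rank := by
  set v := ε • (cc M τ h).mulVec w with hv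
  have hv0 : v ≠ 0 := smul_ne_zero hε.ne' hw
  have hpsd := Matrix.posSemidef_vecMulVec_self_star (R := ℂ) v
  apply rank_lt_of_ker (v := v)
  · intro u hu
    have h1 := (ker_add (psd_cut hM.1 ε) hpsd hu).1
    have h2 : cut M τ = cfc (fun s : ℝ => max (s - τ) 0 / max (s - ε) 0) M * cut M ε := by
      rw [cut, cut, cfc_mul']
      apply cfc_congr_ev hM.1
      intro i
      rcases le_or_gt (hM.1.eigenvalues i) ε with h | h
      · rw [max_eq_right (by linarith), max_eq_right (by linarith)]; simp
      · rw [div_mul_cancel₀]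
        rw [max_eq_left (by linarith)]
        linarith
    rw [h2, ← Matrix.mulVec_mulVec, h1, Matrix.mulVec_zero]
  · have h2 : cut M τ * cc M τ h = 0 := by
      rw [cut, cc, cfc_mul', cfc_congr_ev hM.1 (q := fun _ => 0)]
      · simp
      · intro i
        rcases le_total (hM.1.eigenvalues i) τ with h | h
        · rw [max_eq_right (by linarith)]; simp
        · rw [max_eq_right (a := τ - _) (by linarith)]; simp
    rw [hv, Matrix.mulVec_smul, Matrix.mulVec_mulVec, h2]
    simp
  · intro hz
    have h1 := (ker_add (psd_cut hM.1 ε) hpsd hz).2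
    rw [Matrix.vecMulVec_mulVec] at h1
    have h2 := (smul_eq_zero.1 h1).resolve_right hv0
    have h3 : star v ⬝ᵥ v = 0 := by simpa using h2
    exact hv0 (dotProduct_star_self_eq_zero.1 h3)

lemma rank_BB_le {M : Matrix (Fin n) (Fin n) ℂ} (hM : M.PosSemidef) {τ ε : ℝ} {w : Fin n → ℂ}
    {k : ℕ} (hε : 0 < ε)  :
    (BB M τ ε (max (ε - D k M) 0) w).rank ≤ max M.rank (k + 1) := by
  rcases le_or_gt (ε - D k M) 0 with h | h
  · rw [max_eq_right h]
    refine le_trans (rank_le_of_ker (A := M) fun u hu => ?_) (le_max_left _ _)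
    have hM' : IsSelfAdjoint M := hM.1
    have h1 : (cut M ε).mulVec u = 0 := by
      have h2 : cut M ε = cfc (fun s : ℝ => max (s - ε) 0 / s) M * M := by
        conv_rhs => rw [← cfc_id' ℝ M]
        rw [cfc_id' ℝ M]
        conv_rhs => enter [2]; rw [← cfc_id' ℝ M]
        rw [cut, cfc_mul']
        apply cfc_congr_ev hM.1
        intro i
        rcases eq_or_ne (hM.1.eigenvalues i) 0 with h | h
        · rw [h, max_eq_right (by linarith)]; simp
        · rw [div_mul_cancel₀ _ h]
      rw [h2, ← Matrix.mulVec_mulVec, hu, Matrix.mulVec_zero]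
    have h2 : (cc M τ 0).mulVec u = 0 := by
      rw [cc_eq hM.1, ← Matrix.mulVec_mulVec]
      simp [hu]
    have h3 : (cc M τ 0).IsHermitian := (cfc_predicate _ _ : IsSelfAdjoint (cc M τ 0))
    have h4 : star (ε • (cc M τ 0).mulVec w) ⬝ᵥ u = 0 := by
      rw [star_smul, Matrix.star_mulVec, smul_dotProduct, ← Matrix.dotProduct_mulVec, h3.eq, h2]
      simp
    rw [BB, Matrix.add_mulVec, h1, Matrix.vecMulVec_mulVec, h4]
    simp
  · have h1 : (cut M ε).rank ≤ k := rank_cut_le hM hε.le (by linarith)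
    have h2 := Matrix.rank_vecMulVec_le (ε • (cc M τ (max (ε - D k M) 0)).mulVec w)
      (star (ε • (cc M τ (max (ε - D k M) 0)).mulVec w))
    have h3 := rank_add_le' (cut M ε) (Matrix.vecMulVec (ε • (cc M τ (max (ε - D k M) 0)).mulVec w)
      (star (ε • (cc M τ (max (ε - D k M) 0)).mulVec w)))
    refine le_trans ?_ (le_max_right _ _)
    rw [BB]
    omega

lemma continuous_BB {X : Type*} [TopologicalSpace X] {b : X → Matrix (Fin n) (Fin n) ℂ}
    (hb : Continuous b) (hh : ∀ x, (b x).IsHermitian) (τ : ℝ) {ε h : X → ℝ} {w : X → Fin n → ℂ}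
    (hε : Continuous ε) (ht : Continuous h) (hw : Continuous w) :
    Continuous fun x => BB (b x) τ (ε x) (h x) (w x) := by
  have hv : Continuous fun x => ε x • (cc (b x) τ (h x)).mulVec (w x) :=
    hε.fun_smul ((continuous_cc hb hh τ ht).matrix_mulVec hw)
  exact (continuous_cut hb hh hε).add (hv.matrix_vecMulVec hv.star)

end step

section main
variable {n : ℕ} {X : Type*} [MetricSpace X] [CompactSpace X]

lemma exists_psd_ext {Y : Set X} (hY : IsClosed Y)
    (a : C(Y, Matrix (Fin n) (Fin n) ℂ)) (ha : ∀ y, (a y).PosSemidef) :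
    ∃ b : X → Matrix (Fin n) (Fin n) ℂ, Continuous b ∧ (∀ x, (b x).PosSemidef) ∧
      ∀ (y : X) (hy : y ∈ Y), b y = a ⟨y, hy⟩ := by
  have hentry : ∀ i j, ∃ e : C(X, ℂ), ∀ y : Y, e y = a y i j := by
    intro i j
    obtain ⟨e, he⟩ := ContinuousMap.exists_restrict_eq hY
      (⟨fun y => a y i j, a.continuous.matrix_elem i j⟩ : C(Y, ℂ))
    exact ⟨e, fun y => DFunLike.congr_fun he y⟩
  choose e he using hentry
  let c : X → Matrix (Fin n) (Fin n) ℂ := fun x => Matrix.of fun i j => e i j x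
  have hc : Continuous c := continuous_matrix fun i j => (e i j).continuous
  let c' : X → Matrix (Fin n) (Fin n) ℂ := fun x => (1 / 2 : ℝ) • (c x + (c x).conjTranspose)
  have hc' : Continuous c' := by
    have := hc.matrix_conjTranspose
    exact Continuous.fun_const_smul (Continuous.fun_add hc this) _
  have hh : ∀ x, (c' x).IsHermitian := by
    intro x
    simp only [c', Matrix.IsHermitian, Matrix.conjTranspose_smul, Matrix.conjTranspose_add,
      Matrix.conjTranspose_conjTranspose, star_trivial]
    rw [add_comm]
  refine ⟨fun x => cut (c' x) 0, continuous_cut hc' hh continuous_const,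
    fun x => psd_cut (hh x) 0, fun y hy => ?_⟩
  have h1 : c y = a ⟨y, hy⟩ := by
    ext i j
    exact he i j ⟨y, hy⟩
  have h2 : c' y = a ⟨y, hy⟩ := by
    simp only [c']
    rw [h1, (ha ⟨y, hy⟩).1.eq, ← two_smul ℝ, smul_smul]
    norm_num
  simp only [h2]
  exact cut_zero (ha _)

lemma base_step {Y : Set X} (hY : IsClosed Y) {f : X → ℕ} (hf : LowerSemicontinuous f) (j : ℕ)
    (b : X → Matrix (Fin n) (Fin n) ℂ) (hb : Continuous b) (hpsd : ∀ x, (b x).PosSemidef)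
    (hbY : ∀ y ∈ Y, (b y).rank ≤ f y) (hr : ∀ x, (b x).rank ≤ max (f x) (j + 1)) :
    ∃ b' : X → Matrix (Fin n) (Fin n) ℂ, Continuous b' ∧ (∀ x, (b' x).PosSemidef) ∧
      (∀ y ∈ Y, b' y = b y) ∧ ∀ x, (b' x).rank ≤ max (f x) j := by
  classical
  have hCc : IsClosed {x | f x ≤ j} := hf.isClosed_preimage j
  have hDc : Continuous fun x => D j (b x) := (continuous_D j).comp hb
  let e : X → ℝ := fun x => if x ∈ Y then 0 else D j (b x)
  have heC : ∀ x ∈ {x | f x ≤ j}, e x = D j (b x) := by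
    intro x hx
    simp only [e]
    split_ifs with h
    · exact (D_eq_zero ((hbY x h).trans hx)).symm
    · rfl
  have heY : ∀ x ∈ Y, e x = 0 := fun x hx => by simp [e, hx]
  have hec : ContinuousOn e (Y ∪ {x | f x ≤ j}) := by
    apply ContinuousOn.union_of_isClosed _ _ hY hCc
    · exact continuousOn_const.congr heY
    · exact hDc.continuousOn.congr heC
  obtain ⟨E, hE⟩ := ContinuousMap.exists_restrict_eq (hY.union hCc)
    (⟨_, hec.domRestrict⟩ : C((Y ∪ {x | f x ≤ j} : Set X), ℝ))
  have hE' : ∀ x ∈ Y ∪ {x | f x ≤ j}, E x = e x := fun x hx => DFunLike.congr_fun hE ⟨x, hx⟩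
  refine ⟨fun x => cut (b x) |E x|, continuous_cut hb (fun x => (hpsd x).1) E.continuous.abs,
    fun x => psd_cut (hpsd x).1 _, fun y hy => ?_, fun x => ?_⟩
  · simp only [hE' y (Or.inl hy), heY y hy, abs_zero]
    exact cut_zero (hpsd y)
  · by_cases hx : f x ≤ j
    · refine le_trans ?_ (le_max_right _ _)
      apply rank_cut_le (hpsd x) (abs_nonneg _)
      rw [hE' x (Or.inr hx), heC x hx]
      exact le_abs_self _
    · have h1 := rank_cut_anti (hpsd x).1 (abs_nonneg (E x))
      rw [cut_zero (hpsd x)] at h1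
      have h2 := hr x
      have h3 : max (f x) (j + 1) ≤ max (f x) j := by omega
      exact h1.trans (h2.trans h3)

lemma base {Y : Set X} (hY : IsClosed Y) {f : X → ℕ} (hf : LowerSemicontinuous f)
    (a : C(Y, Matrix (Fin n) (Fin n) ℂ)) (ha : ∀ y, (a y).PosSemidef)
    (har : ∀ y : Y, (a y).rank ≤ f y) (k : ℕ) (hk : k ≤ n) :
    ∃ b : X → Matrix (Fin n) (Fin n) ℂ, Continuous b ∧ (∀ x, (b x).PosSemidef) ∧
      (∀ (y : X) (hy : y ∈ Y), b y = a ⟨y, hy⟩) ∧ ∀ x, (b x).rank ≤ max (f x) k := by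
  induction hk using Nat.decreasingInduction with
  | self =>
    obtain ⟨b, h1, h2, h3⟩ := exists_psd_ext hY a ha
    exact ⟨b, h1, h2, h3, fun x => (Matrix.rank_le_width (b x)).trans (le_max_right _ _)⟩
  | of_succ k hk ih =>
    obtain ⟨b, h1, h2, h3, h4⟩ := ih
    obtain ⟨b', g1, g2, g3, g4⟩ := base_step hY hf k b h1 h2
      (fun y hy => by rw [h3 y hy]; exact har ⟨y, hy⟩) h4
    exact ⟨b', g1, g2, fun y hy => (g3 y hy).trans (h3 y hy), g4⟩

lemma exists_tau {b : X → Matrix (Fin n) (Fin n) ℂ} (hb : Continuous b)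
    (hpsd : ∀ x, (b x).PosSemidef) {K : Set X} (hK : IsClosed K) (j : ℕ)
    (hj : ∀ x ∈ K, j ≤ (b x).rank) :
    ∃ τ : ℝ, 0 < τ ∧ ∃ V : Set X, IsOpen V ∧ K ⊆ V ∧ ∀ x ∈ V, j ≤ (cut (b x) τ).rank := by
  cases j with
  | zero => exact ⟨1, one_pos, Set.univ, isOpen_univ, Set.subset_univ _, fun x _ => Nat.zero_le _⟩
  | succ i =>
    have hDc : Continuous fun x => D i (b x) := (continuous_D i).comp hb
    have hpos : ∀ x ∈ K, 0 < D i (b x) := by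
      intro x hx
      by_contra h
      have := rank_le_of_D (hpsd x) (not_lt.1 h)
      have := hj x hx
      omega
    obtain ⟨τ, hτ, hτK⟩ : ∃ τ : ℝ, 0 < τ ∧ ∀ x ∈ K, τ < D i (b x) := by
      rcases K.eq_empty_or_nonempty with rfl | hne
      · exact ⟨1, one_pos, by simp⟩
      · obtain ⟨x₀, hx₀, hmin⟩ := hK.isCompact.exists_isMinOn hne hDc.continuousOn
        refine ⟨D i (b x₀) / 2, half_pos (hpos x₀ hx₀), fun x hx => ?_⟩
        have h1 : D i (b x₀) ≤ D i (b x) := hmin hx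
        have := hpos x₀ hx₀
        linarith
    exact ⟨τ, hτ, {x | τ < D i (b x)}, isOpen_lt continuous_const hDc, hτK,
      fun x hx => lt_rank_cut (hpsd x) hτ.le hx⟩

lemma step {d : ℕ} (hdim : HasCovDimLE X d) {Y : Set X} (hY : IsClosed Y) {f g : X → ℕ}
    (hf : LowerSemicontinuous f) (hg : UpperSemicontinuous g)
    (hfg : ∀ x, g x + d ≤ f x) (hfn : ∀ x, f x ≤ n) (j : ℕ)
    (b : X → Matrix (Fin n) (Fin n) ℂ) (hb : Continuous b) (hpsd : ∀ x, (b x).PosSemidef)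
    (hbY : ∀ y ∈ Y, g y ≤ (b y).rank) (hr : ∀ x, (b x).rank ≤ f x)
    (hr' : ∀ x, min (g x) j ≤ (b x).rank) :
    ∃ b' : X → Matrix (Fin n) (Fin n) ℂ, Continuous b' ∧ (∀ x, (b' x).PosSemidef) ∧
      (∀ y ∈ Y, b' y = b y) ∧ (∀ x, (b' x).rank ≤ f x) ∧
      ∀ x, min (g x) (j + 1) ≤ (b' x).rank := by
  have hDc : ∀ k, Continuous fun x => D k (b x) := fun k => (continuous_D k).comp hb
  let K : Set X := {x | D j (b x) ≤ 0} ∩ {x | j + 1 ≤ g x}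
  have hKc : IsClosed K :=
    (isClosed_le (hDc j) continuous_const).inter (hg.isClosed_preimage (j + 1))
  have hKr : ∀ x ∈ K, (b x).rank ≤ j := fun x hx => rank_le_of_D (hpsd x) hx.1
  have hKg : ∀ x ∈ K, j + 1 ≤ g x := fun x hx => hx.2
  obtain ⟨τ, hτ, V, hVo, hKV, hV⟩ := exists_tau hb hpsd hKc j fun x hx => by
    have h1 := hr' x
    have h2 := hKg x hx
    omega
  let W : Set X := ((Yᶜ ∩ {x | D j (b x) < τ}) ∩ {x | j + d < f x}) ∩ V
  have hWo : IsOpen W := ((hY.isOpen_compl.inter (isOpen_lt (hDc j) continuous_const)).inter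
    (hf.isOpen_preimage (j + d))).inter hVo
  have hKW : K ⊆ W := by
    intro x hx
    refine ⟨⟨⟨fun hxY => ?_, ?_⟩, ?_⟩, hKV hx⟩
    · have h1 := hbY x hxY
      have h2 := hKr x hx
      have h3 := hKg x hx
      omega
    · exact lt_of_le_of_lt hx.1 hτ
    · have h2 := hfg x
      have h3 := hKg x hx
      show j + d < f x
      omega
  obtain ⟨χ, hχ0, hχ1, hχ⟩ := exists_continuous_zero_one_of_isClosed hWo.isClosed_compl hKc
    (Set.disjoint_left.2 fun x hx hx' => hx (hKW hx'))
  let ε : X → ℝ := fun x => τ / 2 * χ x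
  have hεc : Continuous ε := continuous_const.mul χ.continuous
  have hε0 : ∀ x, 0 ≤ ε x := fun x => mul_nonneg (half_pos hτ).le (hχ x).1
  have hετ : ∀ x, ε x < τ := fun x => by
    have : ε x ≤ τ / 2 * 1 := mul_le_mul_of_nonneg_left (hχ x).2 (half_pos hτ).le
    linarith
  let h : X → ℝ := fun x => max (ε x - D (j + d) (b x)) 0
  have hhc : Continuous h := (hεc.sub (hDc _)).max continuous_const
  have hO : ∀ x, 0 < ε x → x ∈ W := by
    intro x hx
    by_contra hxW
    have h1 : χ x = 0 := hχ0 hxW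
    simp [ε, h1] at hx
  have hC := continuous_cc hb (fun x => (hpsd x).1) τ hhc
  obtain ⟨w, hw⟩ := exists_section hdim hC {x | 0 < ε x} fun x hx =>
    rank_cc (hpsd x) (hO x hx).1.1.2 hx (by
      have h1 : j + d < f x := (hO x hx).1.2
      have h2 := hfn x
      omega)
  have hzero : ∀ x, ε x = 0 → BB (b x) τ (ε x) (h x) (w x) = b x := by
    intro x hx
    rw [hx]
    exact BB_zero (hpsd x) _ _ _
  refine ⟨fun x => BB (b x) τ (ε x) (h x) (w x),
    continuous_BB hb (fun x => (hpsd x).1) τ hεc hhc w.continuous,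
    fun x => psd_BB (hpsd x) _ _ _ _, fun y hy => ?_, fun x => ?_, fun x => ?_⟩
  · apply hzero
    by_contra hne
    exact (hO y (lt_of_le_of_ne (hε0 y) (Ne.symm hne))).1.1.1 hy
  · rcases (hε0 x).eq_or_lt with h0 | h0
    · simp only [hzero x h0.symm]
      exact hr x
    · have h1 : (BB (b x) τ (ε x) (h x) (w x)).rank ≤ max (b x).rank (j + d + 1) :=
        rank_BB_le (hpsd x) h0
      have h2 : j + d < f x := (hO x h0).1.2
      have h3 := hr x
      show (BB (b x) τ (ε x) (h x) (w x)).rank ≤ f x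
      omega
  · rcases (hε0 x).eq_or_lt with h0 | h0
    · simp only [hzero x h0.symm]
      have hxK : x ∉ K := by
        intro hx
        have h1 : χ x = 1 := hχ1 hx
        simp [ε, h1] at h0
        linarith
      by_contra hlt
      push Not at hlt
      have h1 := hr' x
      apply hxK
      exact ⟨(D_eq_zero (by omega)).le, show j + 1 ≤ g x by omega⟩
    · have h1 := rank_BB_ge (hpsd x) h0 (hετ x) (hw x h0)
      have h2 := hV x (hO x h0).2
      show min (g x) (j + 1) ≤ (BB (b x) τ (ε x) (h x) (w x)).rank
      omega

end main

end RankExt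

/-- Rank-constrained extension from a closed subset `Y` of a compact metric
space `X` of covering dimension `d`: if `f` is lower semicontinuous, `g` upper
semicontinuous, `f - g ≥ 4d`, `f ≤ n`, and `a ∈ M_n(C(Y))` is positive with
`g ≤ rank(a(·)) ≤ f` on `Y`, then `a` extends to a positive `b ∈ M_n(C(X))` with
`g ≤ rank(b(·)) ≤ f` on all of `X`. -/
theorem stmt8 {X : Type*} [MetricSpace X] [CompactSpace X] (d : ℕ) (hdim : IsCovDim X d)
    (Y : Set X) (hY : IsClosed Y)
    (n : ℕ) (hn : 0 < n) (f g : X → ℕ)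
    (hfbdd : ∃ C : ℕ, ∀ x, f x ≤ C) (hgbdd : ∃ C : ℕ, ∀ x, g x ≤ C)
    (hf : LowerSemicontinuous f) (hg : UpperSemicontinuous g)
    (hfg : ∀ x, g x + 4 * d ≤ f x) (hfn : ∀ x, f x ≤ n)
    (a : C(Y, Matrix (Fin n) (Fin n) ℂ)) (ha : ∀ y, (a y).PosSemidef)
    (harank : ∀ y : Y, g y.1 ≤ (a y).rank ∧ (a y).rank ≤ f y.1) :
    ∃ b : C(X, Matrix (Fin n) (Fin n) ℂ),
      (∀ x, (b x).PosSemidef) ∧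
      (∀ (y : X) (hy : y ∈ Y), b y = a ⟨y, hy⟩) ∧
      (∀ x : X, g x ≤ (b x).rank ∧ (b x).rank ≤ f x) := by
  have key : ∀ j : ℕ, ∃ b : X → Matrix (Fin n) (Fin n) ℂ, Continuous b ∧
      (∀ x, (b x).PosSemidef) ∧ (∀ (y : X) (hy : y ∈ Y), b y = a ⟨y, hy⟩) ∧
      (∀ x, (b x).rank ≤ f x) ∧ ∀ x, min (g x) j ≤ (b x).rank := by
    intro j
    induction j with
    | zero =>
      obtain ⟨b, h1, h2, h3, h4⟩ :=
        RankExt.base hY hf a ha (fun y => (harank y).2) 0 (Nat.zero_le n)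
      exact ⟨b, h1, h2, h3, fun x => by simpa using h4 x, fun x => by simp⟩
    | succ j ih =>
      obtain ⟨b, h1, h2, h3, h4, h5⟩ := ih
      obtain ⟨b', g1, g2, g3, g4, g5⟩ := RankExt.step hdim.1 hY hf hg
        (fun x => by have := hfg x; omega) hfn j b h1 h2
        (fun y hy => by rw [h3 y hy]; exact (harank ⟨y, hy⟩).1) h4 h5
      exact ⟨b', g1, g2, fun y hy => (g3 y hy).trans (h3 y hy), g4, g5⟩
  obtain ⟨b, h1, h2, h3, h4, h5⟩ := key n
  refine ⟨⟨b, h1⟩, h2, h3, fun x => ⟨?_, h4 x⟩⟩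
  have e1 := h5 x
  have e2 := hfg x
  have e3 := hfn x
  show g x ≤ (b x).rank
  omega
end

section
/- Let X be a topological space, let α : X → ℝ be bounded and continuous, and let n be a positive integer. Then: (1) there exists a largest lower semicontinuous function underline_α_n : X → ℝ taking values in {k/n : k ∈ ℤ} with underline_α_n ≤ α pointwise, i.e., underline_α_n is lower semicontinuous, takes values in (1/n)ℤ, satisfies underline_α_n ≤ α, and every lower semicontinuous function with values in (1/n)ℤ that is ≤ α pointwise is ≤ underline_α_n pointwise; (2) there exists a smallest upper semicontinuous function overline_α_n : X → ℝ taking values in {k/n : k ∈ ℤ} with overline_α_n ≥ α pointwise. -/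
theorem lower_aux {X : Type*} [TopologicalSpace X] (α : X → ℝ)
    (hbdd : ∃ C : ℝ, ∀ x, |α x| ≤ C) (n : ℕ) (hn : 0 < n) :
    ∃ u : X → ℝ, LowerSemicontinuous u ∧ (∀ x, ∃ k : ℤ, u x = (k : ℝ) / n) ∧
      (∀ x, u x ≤ α x) ∧
      ∀ v : X → ℝ, LowerSemicontinuous v → (∀ x, ∃ k : ℤ, v x = (k : ℝ) / n) →
        (∀ x, v x ≤ α x) → ∀ x, v x ≤ u x := by
  obtain ⟨C, hC⟩ := hbdd
  have hn' : (0 : ℝ) < n := by exact_mod_cast hn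
  have key : ∀ x, ∃ v : X → ℝ, (LowerSemicontinuous v ∧ (∀ x, ∃ k : ℤ, v x = (k : ℝ) / n) ∧
      (∀ x, v x ≤ α x)) ∧ ∀ w : X → ℝ, LowerSemicontinuous w →
        (∀ x, ∃ k : ℤ, w x = (k : ℝ) / n) → (∀ x, w x ≤ α x) → w x ≤ v x := by
    intro x
    obtain ⟨k, ⟨v, h1, h2, h3, h4⟩, hk⟩ := Int.exists_greatest_of_bdd
      (P := fun k : ℤ => ∃ v : X → ℝ, LowerSemicontinuous v ∧
        (∀ x, ∃ k : ℤ, v x = (k : ℝ) / n) ∧ (∀ x, v x ≤ α x) ∧ v x = (k : ℝ) / n)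
      ⟨⌈α x * n⌉, by
        rintro z ⟨v, -, -, h3, h4⟩
        have h := h3 x
        rw [h4, div_le_iff₀ hn'] at h
        exact_mod_cast h.trans (Int.le_ceil _)⟩
      ⟨⌊-C * n⌋, fun _ => ((⌊-C * n⌋ : ℤ) : ℝ) / n, continuous_const.lowerSemicontinuous,
        fun _ => ⟨_, rfl⟩, fun y => by
          rw [div_le_iff₀ hn']
          exact (Int.floor_le _).trans
            (mul_le_mul_of_nonneg_right (abs_le.1 (hC y)).1 hn'.le), rfl⟩
    refine ⟨v, ⟨h1, h2, h3⟩, fun w w1 w2 w3 => ?_⟩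
    obtain ⟨j, hj⟩ := w2 x
    have hjk : (j : ℝ) ≤ k := by exact_mod_cast hk j ⟨w, w1, w2, w3, hj⟩
    rw [hj, h4]
    exact div_le_div_of_nonneg_right hjk hn'.le
  choose V hV hmax using key
  refine ⟨fun x => V x x, ?_, fun x => (hV x).2.1 x, fun x => (hV x).2.2 x,
    fun v v1 v2 v3 x => hmax x v v1 v2 v3⟩
  intro x y hy
  filter_upwards [(hV x).1 x y hy] with z hz
  exact lt_of_lt_of_le hz (hmax z _ (hV x).1 (hV x).2.1 (hV x).2.2)

theorem neg_vals {X : Type*} {n : ℕ} {f : X → ℝ} (h : ∀ x, ∃ k : ℤ, f x = (k : ℝ) / n) :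
    ∀ x, ∃ k : ℤ, -f x = (k : ℝ) / n := by
  intro x
  obtain ⟨k, hk⟩ := h x
  exact ⟨-k, by rw [hk]; push_cast; ring⟩

/-- For a bounded continuous `α : X → ℝ` and `n ≥ 1`, there exist (1) a largest
lower semicontinuous function with values in `(1/n)ℤ` lying below `α`, and (2) a smallest
upper semicontinuous function with values in `(1/n)ℤ` lying above `α`. -/
theorem stmt9 {X : Type*} [TopologicalSpace X] (α : X → ℝ) (hα : Continuous α)
    (hbdd : ∃ C : ℝ, ∀ x, |α x| ≤ C) (n : ℕ) (hn : 0 < n) :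
    (∃ u : X → ℝ, LowerSemicontinuous u ∧ (∀ x, ∃ k : ℤ, u x = (k : ℝ) / n) ∧
      (∀ x, u x ≤ α x) ∧
      ∀ v : X → ℝ, LowerSemicontinuous v → (∀ x, ∃ k : ℤ, v x = (k : ℝ) / n) →
        (∀ x, v x ≤ α x) → ∀ x, v x ≤ u x) ∧
    (∃ o : X → ℝ, UpperSemicontinuous o ∧ (∀ x, ∃ k : ℤ, o x = (k : ℝ) / n) ∧
      (∀ x, α x ≤ o x) ∧
      ∀ w : X → ℝ, UpperSemicontinuous w → (∀ x, ∃ k : ℤ, w x = (k : ℝ) / n) →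
        (∀ x, α x ≤ w x) → ∀ x, o x ≤ w x) := by
  refine ⟨lower_aux α hbdd n hn, ?_⟩
  obtain ⟨u, h1, h2, h3, h4⟩ := lower_aux (fun x => -α x) (by simpa using hbdd) n hn
  refine ⟨fun x => -u x, ?_, neg_vals h2, fun x => by linarith [h3 x], ?_⟩
  · intro x y hy
    filter_upwards [h1 x (-y) (by linarith)] with z hz
    linarith
  · intro w w1 w2 w3 x
    have := h4 (fun x => -w x) (by
      intro x y hy
      filter_upwards [w1 x (-y) (by linarith)] with z hz
      linarith) (neg_vals w2) (fun x => by linarith [w3 x]) x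
    linarith
end

section
/- Let X be a topological space, let α : X → ℝ be bounded and continuous, and let n be a positive integer. Let underline_α_n be the largest lower semicontinuous function on X with values in {k/n : k ∈ ℤ} satisfying underline_α_n ≤ α pointwise, and let overline_α_n be the smallest upper semicontinuous function on X with values in {k/n : k ∈ ℤ} satisfying overline_α_n ≥ α pointwise. Then for every x ∈ X, 0 ≤ α(x) − underline_α_n(x) < 2/n and 0 ≤ overline_α_n(x) − α(x) < 2/n. -/
/-- Let `α : X → ℝ` be bounded and continuous, let `u` be the largest lower
semicontinuous `(1/n)ℤ`-valued function below `α`, and let `o` be the smallest upper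
semicontinuous `(1/n)ℤ`-valued function above `α`.  Then pointwise
`0 ≤ α - u < 2/n` and `0 ≤ o - α < 2/n`. -/
theorem stmt11 {X : Type*} [TopologicalSpace X] (α : X → ℝ) (hα : Continuous α)
    (hbdd : ∃ C : ℝ, ∀ x, |α x| ≤ C) (n : ℕ) (hn : 0 < n)
    (u : X → ℝ) (hu : LowerSemicontinuous u) (huval : ∀ x, ∃ k : ℤ, u x = (k : ℝ) / n)
    (humin : ∀ x, u x ≤ α x)
    (humax : ∀ v : X → ℝ, LowerSemicontinuous v → (∀ x, ∃ k : ℤ, v x = (k : ℝ) / n) →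
      (∀ x, v x ≤ α x) → ∀ x, v x ≤ u x)
    (o : X → ℝ) (ho : UpperSemicontinuous o) (hoval : ∀ x, ∃ k : ℤ, o x = (k : ℝ) / n)
    (homaj : ∀ x, α x ≤ o x)
    (homin : ∀ w : X → ℝ, UpperSemicontinuous w → (∀ x, ∃ k : ℤ, w x = (k : ℝ) / n) →
      (∀ x, α x ≤ w x) → ∀ x, o x ≤ w x) :
    ∀ x : X, (0 ≤ α x - u x ∧ α x - u x < 2 / n) ∧
      (0 ≤ o x - α x ∧ o x - α x < 2 / n) := by
  have hnpos : (0 : ℝ) < n := by exact_mod_cast hn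
  have hc : Continuous fun x => (n : ℝ) * α x := continuous_const.mul hα
  have h12 : (1 : ℝ) / n < 2 / n := by gcongr; norm_num
  intro x
  have h1 : ((⌈(n : ℝ) * α x⌉ - 1 : ℤ) : ℝ) / n ≤ u x := by
    refine humax (fun x => ((⌈(n : ℝ) * α x⌉ - 1 : ℤ) : ℝ) / n) ?_ (fun x => ⟨_, rfl⟩) ?_ x
    · intro z y hy
      have hz : ((⌈(n : ℝ) * α z⌉ - 1 : ℤ) : ℝ) < (n : ℝ) * α z := by
        have := Int.ceil_lt_add_one ((n : ℝ) * α z)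
        push_cast; linarith
      filter_upwards [hc.continuousAt.eventually (lt_mem_nhds hz)] with t ht
      refine lt_of_lt_of_le hy ?_
      have h : ⌈(n : ℝ) * α z⌉ - 1 < ⌈(n : ℝ) * α t⌉ := Int.lt_ceil.2 ht
      have hle : ⌈(n : ℝ) * α z⌉ - 1 ≤ ⌈(n : ℝ) * α t⌉ - 1 := by omega
      have hcast : ((⌈(n : ℝ) * α z⌉ - 1 : ℤ) : ℝ) ≤ ((⌈(n : ℝ) * α t⌉ - 1 : ℤ) : ℝ) := by
        exact_mod_cast hle
      exact div_le_div_of_nonneg_right hcast hnpos.le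
    · intro z
      have := Int.ceil_lt_add_one ((n : ℝ) * α z)
      rw [div_le_iff₀ hnpos]
      push_cast; linarith
  have h2 : o x ≤ ((⌊(n : ℝ) * α x⌋ + 1 : ℤ) : ℝ) / n := by
    refine homin (fun x => ((⌊(n : ℝ) * α x⌋ + 1 : ℤ) : ℝ) / n) ?_ (fun x => ⟨_, rfl⟩) ?_ x
    · intro z y hy
      have hz : (n : ℝ) * α z < ((⌊(n : ℝ) * α z⌋ + 1 : ℤ) : ℝ) := by
        have := Int.lt_floor_add_one ((n : ℝ) * α z)
        push_cast; linarith
      filter_upwards [hc.continuousAt.eventually (gt_mem_nhds hz)] with t ht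
      refine lt_of_le_of_lt ?_ hy
      have h : ⌊(n : ℝ) * α t⌋ < ⌊(n : ℝ) * α z⌋ + 1 := Int.floor_lt.2 ht
      have hle : ⌊(n : ℝ) * α t⌋ + 1 ≤ ⌊(n : ℝ) * α z⌋ + 1 := by omega
      have hcast : ((⌊(n : ℝ) * α t⌋ + 1 : ℤ) : ℝ) ≤ ((⌊(n : ℝ) * α z⌋ + 1 : ℤ) : ℝ) := by
        exact_mod_cast hle
      exact div_le_div_of_nonneg_right hcast hnpos.le
    · intro z
      have := Int.lt_floor_add_one ((n : ℝ) * α z)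
      rw [le_div_iff₀ hnpos]
      push_cast; linarith
  have h3 : α x - 1 / n ≤ ((⌈(n : ℝ) * α x⌉ - 1 : ℤ) : ℝ) / n := by
    have := Int.le_ceil ((n : ℝ) * α x)
    rw [le_div_iff₀ hnpos, sub_mul, div_mul_cancel₀ _ hnpos.ne']
    push_cast; linarith
  have h4 : ((⌊(n : ℝ) * α x⌋ + 1 : ℤ) : ℝ) / n ≤ α x + 1 / n := by
    have := Int.floor_le ((n : ℝ) * α x)
    rw [div_le_iff₀ hnpos, add_mul, div_mul_cancel₀ _ hnpos.ne']
    push_cast; linarith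
  have h5 := humin x
  have h6 := homaj x
  refine ⟨⟨?_, ?_⟩, ?_, ?_⟩ <;> linarith
end

section
/- Let X be a compact metric space, let Y ⊆ X be closed, and let n be a positive integer. Let g : X → ℤ≥0 be bounded and upper semicontinuous, and let a ∈ M_n(C(Y)) be positive with rank(a(y)) ≥ g(y) for all y ∈ Y. Then there exist an open set U ⊇ Y and a positive element ã of C_b(U, M_n(ℂ)) such that ã restricted to Y equals a and rank(ã(z)) ≥ g(z) for all z ∈ U. -/
open scoped ComplexOrder

open scoped MatrixOrder Matrix.Norms.L2Operator in
theorem exists_continuous_factor {T : Type*} [TopologicalSpace T] (n : ℕ)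
    (a : C(T, Matrix (Fin n) (Fin n) ℂ)) (ha : ∀ y, (a y).PosSemidef) :
    ∃ c : C(T, Matrix (Fin n) (Fin n) ℂ), ∀ y, (c y).conjTranspose * c y = a y := by
  refine ⟨⟨fun y => CFC.sqrt (a y),
    CFC.continuousOn_sqrt.comp_continuous a.continuous fun y => (ha y).nonneg⟩, fun y => ?_⟩
  have h0 : (0 : Matrix (Fin n) (Fin n) ℂ) ≤ CFC.sqrt (a y) := CFC.sqrt_nonneg _
  have h1 : (CFC.sqrt (a y)).conjTranspose = CFC.sqrt (a y) :=
    (Matrix.nonneg_iff_posSemidef.mp h0).isHermitian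
  change (CFC.sqrt (a y)).conjTranspose * CFC.sqrt (a y) = a y
  rw [h1]
  exact CFC.sqrt_mul_sqrt_self (a y) (ha y).nonneg

/-- A positive `a ∈ M_n(C(Y))` on a closed subset `Y` of a compact metric
space `X`, whose pointwise rank dominates a bounded upper semicontinuous `g : X → ℤ≥0`,
extends to a bounded continuous positive `ã` on some open `U ⊇ Y` with
`rank(ã(z)) ≥ g(z)` for all `z ∈ U`. -/
theorem stmt14 {X : Type*} [MetricSpace X] [CompactSpace X] (Y : Set X) (hY : IsClosed Y)
    (n : ℕ) (hn : 0 < n) (g : X → ℕ)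
    (hgbdd : ∃ C : ℕ, ∀ x, g x ≤ C) (hg : UpperSemicontinuous g)
    (a : C(Y, Matrix (Fin n) (Fin n) ℂ)) (ha : ∀ y, (a y).PosSemidef)
    (harank : ∀ y : Y, g y.1 ≤ (a y).rank) :
    ∃ (U : Set X) (hYU : Y ⊆ U), IsOpen U ∧
      ∃ b : C(U, Matrix (Fin n) (Fin n) ℂ),
        (∃ C : ℝ, ∀ (z : U) (i j : Fin n), ‖b z i j‖ ≤ C) ∧
        (∀ z : U, (b z).PosSemidef) ∧
        (∀ (y : X) (hy : y ∈ Y), b ⟨y, hYU hy⟩ = a ⟨y, hy⟩) ∧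
        (∀ z : U, g z.1 ≤ (b z).rank) := by
  rcases Y.eq_empty_or_nonempty with rfl | hne
  · refine ⟨∅, subset_rfl, isOpen_empty, ⟨fun z => z.2.elim, ?_⟩, ⟨0, fun z => z.2.elim⟩,
      fun z => z.2.elim, fun y hy => hy.elim, fun z => z.2.elim⟩
    exact continuous_of_const fun z => z.2.elim
  obtain ⟨c, hc⟩ := exists_continuous_factor n a ha
  haveI : TietzeExtension (Matrix (Fin n) (Fin n) ℂ) := TietzeExtension.of_tvs ℂ
  obtain ⟨d, hd⟩ := ContinuousMap.exists_restrict_eq hY c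
  have hd' : ∀ y : Y, d y.1 = c y := fun y => by rw [← hd]; rfl
  let B : X → Matrix (Fin n) (Fin n) ℂ := fun z =>
    (d z).conjTranspose * d z + ((Metric.infDist z Y : ℝ) : ℂ) • (1 : Matrix (Fin n) (Fin n) ℂ)
  have hdc : Continuous d := d.continuous
  have hB : Continuous B := by
    have h1 : Continuous fun z => ((Metric.infDist z Y : ℝ) : ℂ) :=
      Complex.continuous_ofReal.comp (Metric.continuous_infDist_pt Y)
    exact (hdc.matrix_conjTranspose.matrix_mul hdc).add (h1.smul continuous_const)
  have hBY : ∀ y : Y, B y.1 = a y := fun y => by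
    simp only [B, hd', hc, Metric.infDist_zero_of_mem y.2]
    simp
  refine ⟨{x | g x < n + 1}, fun y hy => ?_, hg.isOpen_preimage (n + 1),
    ⟨fun z => B z.1, hB.comp continuous_subtype_val⟩, ?_, fun z => ?_, fun y hy => hBY ⟨y, hy⟩,
    fun z => ?_⟩
  · exact Nat.lt_succ_of_le ((harank ⟨y, hy⟩).trans (by simpa using (a ⟨y, hy⟩).rank_le_card_width))
  · have hN : Continuous fun z => ∑ i, ∑ j, ‖B z i j‖ :=
      continuous_finset_sum _ fun i _ => continuous_finset_sum _ fun j _ =>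
        (hB.matrix_elem i j).norm
    obtain ⟨C, hC⟩ := (isCompact_range hN).bddAbove
    refine ⟨C, fun z i j => le_trans ?_ (hC ⟨z.1, rfl⟩)⟩
    refine le_trans ?_ (Finset.single_le_sum (f := fun i => ∑ j, ‖B z i j‖)
      (fun i _ => Finset.sum_nonneg fun j _ => norm_nonneg _) (Finset.mem_univ i))
    exact Finset.single_le_sum (f := fun j => ‖B z i j‖)
      (fun j _ => norm_nonneg _) (Finset.mem_univ j)
  · exact (Matrix.posSemidef_conjTranspose_mul_self _).add
      (Matrix.PosSemidef.one.smul (by exact_mod_cast Metric.infDist_nonneg))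
  · by_cases hz : z.1 ∈ Y
    · change g z.1 ≤ (B z.1).rank
      rw [hBY ⟨z.1, hz⟩]
      exact harank ⟨z.1, hz⟩
    · have hpos : 0 < Metric.infDist z.1 Y := (hY.notMem_iff_infDist_pos hne).mp hz
      have hPD : (B z.1).PosDef := Matrix.PosDef.posSemidef_add
        (Matrix.posSemidef_conjTranspose_mul_self _)
        (Matrix.PosDef.one.smul (by exact_mod_cast hpos))
      change g z.1 ≤ (B z.1).rank
      rw [Matrix.rank_of_isUnit _ hPD.isUnit]
      simpa using Nat.le_of_lt_succ z.2
end

section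
/- Let n be a positive integer, let η > 0, and let A, B ∈ M_n(ℂ) be positive semidefinite matrices with ‖A − B‖ < η in the operator norm. Then rank((A − η·1)₊) ≤ rank(B), where (A − η·1)₊ denotes the positive part of the Hermitian matrix A − η·1 (the matrix obtained by applying t ↦ max(t, 0) to its eigenvalues in a spectral decomposition). -/
open scoped ComplexOrder

lemma stmt16_norm_unitary {n : ℕ} (U : Matrix (Fin n) (Fin n) ℂ)
    (hU : U ∈ Matrix.unitaryGroup (Fin n) ℂ) (w : Fin n → ℂ) :
    ‖WithLp.toLp 2 (U.mulVec w)‖ = ‖WithLp.toLp 2 w‖ := by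
  rw [← Matrix.toEuclideanCLM_toLp (𝕜 := ℂ)]
  apply ContinuousLinearMap.norm_map_of_mem_unitary
  exact Unitary.map_mem (Matrix.toEuclideanCLM (𝕜 := ℂ) (n := Fin n)) hU

/-- If `A, B ∈ M_n(ℂ)` are positive semidefinite with `‖A - B‖ < η` in the
operator norm (realized via the action on Euclidean space), then the positive part
`(A - η·1)₊`, computed via any spectral decomposition `A - η·1 = U diag(λ) U*` with `U`
unitary by applying `t ↦ max t 0` to the eigenvalues, satisfies
`rank((A - η·1)₊) ≤ rank(B)`. -/
theorem stmt16 (n : ℕ) (hn : 0 < n) (η : ℝ) (hη : 0 < η)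
    (A B : Matrix (Fin n) (Fin n) ℂ) (hA : A.PosSemidef) (hB : B.PosSemidef)
    (hnorm : ‖Matrix.toEuclideanCLM (𝕜 := ℂ) (A - B)‖ < η)
    (U : Matrix (Fin n) (Fin n) ℂ) (hU : U ∈ Matrix.unitaryGroup (Fin n) ℂ)
    (lam : Fin n → ℝ)
    (hdecomp : A - (η : ℂ) • 1 = U * Matrix.diagonal (fun i => (lam i : ℂ)) * star U) :
    (U * Matrix.diagonal (fun i => (↑(max (lam i) 0) : ℂ)) * star U).rank ≤ B.rank := by
  set P := U * Matrix.diagonal (fun i => (↑(max (lam i) 0) : ℂ)) * star U with hP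
  have hUU : star U * U = 1 := (Matrix.mem_unitaryGroup_iff').1 hU
  have hdisj : Disjoint (LinearMap.range P.mulVecLin) (LinearMap.ker B.mulVecLin) := by
    rw [Submodule.disjoint_def]
    rintro x ⟨y, rfl⟩ hx
    rw [LinearMap.mem_ker, Matrix.mulVecLin_apply] at hx
    rw [Matrix.mulVecLin_apply] at hx ⊢
    set z := (star U).mulVec y with hz
    set w := (Matrix.diagonal (fun i => (↑(max (lam i) 0) : ℂ))).mulVec z with hw
    have hPy : P.mulVec y = U.mulVec w := by
      rw [hw, hz, Matrix.mulVec_mulVec, Matrix.mulVec_mulVec, hP, Matrix.mul_assoc]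
    rw [hPy] at hx ⊢
    have hAx : (A - B).mulVec (U.mulVec w) = U.mulVec (fun i => ((lam i + η : ℝ) : ℂ) * w i) := by
      have hA' : A = U * Matrix.diagonal (fun i => (lam i : ℂ)) * star U + (η : ℂ) • 1 := by
        rw [← hdecomp]; abel
      have h1 : (star U).mulVec (U.mulVec w) = w := by
        rw [Matrix.mulVec_mulVec, hUU, Matrix.one_mulVec]
      rw [Matrix.sub_mulVec, hx, sub_zero, hA', Matrix.add_mulVec, ← Matrix.mulVec_mulVec, h1,
        ← Matrix.mulVec_mulVec, Matrix.smul_mulVec, Matrix.one_mulVec, ← Matrix.mulVec_smul,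
        ← Matrix.mulVec_add]
      congr 1
      ext i
      simp [Matrix.mulVec_diagonal]
      ring
    have hge : η * ‖WithLp.toLp 2 w‖ ≤
        ‖WithLp.toLp 2 (fun i => ((lam i + η : ℝ) : ℂ) * w i)‖ := by
      have : η * ‖WithLp.toLp 2 w‖ = ‖WithLp.toLp 2 ((η : ℂ) • w)‖ := by
        rw [WithLp.toLp_smul, norm_smul, Complex.norm_real, Real.norm_of_nonneg hη.le]
      rw [this, EuclideanSpace.norm_eq, EuclideanSpace.norm_eq]
      apply Real.sqrt_le_sqrt
      apply Finset.sum_le_sum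
      intro i _
      simp only [Pi.smul_apply, smul_eq_mul, norm_mul, Complex.norm_real, Real.norm_eq_abs]
      rcases le_or_gt (lam i) 0 with h | h
      · have : w i = 0 := by simp [hw, Matrix.mulVec_diagonal, max_eq_right h]
        simp [this]
      · rw [abs_of_pos hη, abs_of_pos (by linarith)]
        gcongr
        linarith
    have hle := (Matrix.toEuclideanCLM (𝕜 := ℂ) (A - B)).le_opNorm (WithLp.toLp 2 (U.mulVec w))
    rw [Matrix.toEuclideanCLM_toLp, hAx, stmt16_norm_unitary U hU, stmt16_norm_unitary U hU] at hle
    have hw0 : ‖WithLp.toLp 2 w‖ = 0 := by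
      by_contra hne
      have hpos : 0 < ‖WithLp.toLp 2 w‖ := lt_of_le_of_ne (norm_nonneg _) (Ne.symm hne)
      have := mul_lt_mul_of_pos_right hnorm hpos
      linarith
    have : w = 0 := by simpa using hw0
    rw [this, Matrix.mulVec_zero]
  have h1 := Submodule.finrank_add_finrank_le_of_disjoint hdisj
  have h2 := LinearMap.finrank_range_add_finrank_ker B.mulVecLin
  unfold Matrix.rank
  omega
end
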